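/- If G is a finite simple graph with maximum average degree Mad(G) < 5/2, then the star chromatic number of G satisfies χ_s(G) ≤ 4. -/

import Mathlib

open SimpleGraph

noncomputable def edgeCount {V : Type*} (G : SimpleGraph V) : ℕ := Nat.card G.edgeSet

noncomputable def deg {V : Type*} (G : SimpleGraph V) (v : V) : ℕ := Nat.card (G.neighborSet v)

def TwoIndependent {V : Type*} (G : SimpleGraph V) (S : Set V) : Prop :=
  ∀ u ∈ S, ∀ v ∈ S, u ≠ v → ¬ G.Adj u v ∧ ∀ w, ¬ (G.Adj u w ∧ G.Adj w v)

def IsIFPartition {V : Type*} (G : SimpleGraph V) (A B : Set V) : Prop :=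
  A ∪ B = Set.univ ∧ Disjoint A B ∧ TwoIndependent G A ∧ (G.induce B).IsAcyclic

def IsAssignment {V : Type*} (I F U : Set V) : Prop :=
  I ∪ F ∪ U = Set.univ ∧ Disjoint I F ∧ Disjoint I U ∧ Disjoint F U

noncomputable def rho {V : Type*} (G : SimpleGraph V) (I F U : Set V) (H : G.Subgraph) : ℤ :=
  (H.verts ∩ I).ncard + 4 * (H.verts ∩ F).ncard + 5 * (H.verts ∩ U).ncard
    - 4 * Nat.card H.edgeSet

noncomputable def rhoSet {V : Type*} (G : SimpleGraph V) (I F U : Set V) (S : Set V) : ℤ :=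
  (S ∩ I).ncard + 4 * (S ∩ F).ncard + 5 * (S ∩ U).ncard - 4 * edgeCount (G.induce S)

def IsCounterexample {V : Type*} [Fintype V] (G : SimpleGraph V) (I F U : Set V) : Prop :=
  IsAssignment I F U ∧
  (∀ H : G.Subgraph, H.verts.Nonempty → 0 < rho G I F U H) ∧
  ¬ ∃ A B : Set V, IsIFPartition G A B ∧ I ⊆ A ∧ F ⊆ B

def IsMinCounterexample {V : Type*} [Fintype V] (G : SimpleGraph V) (I F U : Set V) : Prop :=
  IsCounterexample G I F U ∧
  ∀ (n : ℕ) (G' : SimpleGraph (Fin n)) (I' F' U' : Set (Fin n)),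
    IsCounterexample G' I' F' U' →
    Fintype.card V + edgeCount G ≤ n + edgeCount G'

def IsThread {V : Type*} (G : SimpleGraph V) (I F U : Set V) (p : List V) : Prop :=
  p ≠ [] ∧ p.Nodup ∧ p.Chain' G.Adj ∧ (∀ v ∈ p, v ∈ U ∧ deg G v = 2) ∧
  (∀ w, w ∉ p → (∃ a ∈ p, G.Adj a w) → 3 ≤ deg G w ∨ w ∈ I ∪ F)

def BordersThread {V : Type*} (G : SimpleGraph V) (p : List V) (w : V) : Prop :=
  w ∉ p ∧ ∃ a ∈ p, G.Adj a w

def IsStarForest {V : Type*} (H : SimpleGraph V) : Prop :=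
  H.IsAcyclic ∧ ∀ a b c d : V, H.Adj a b → H.Adj b c → H.Adj c d → a = c ∨ b = d

def IsStarColoring {V : Type*} {k : ℕ} (G : SimpleGraph V) (c : V → Fin k) : Prop :=
  (∀ u v, G.Adj u v → c u ≠ c v) ∧
  ∀ i j : Fin k, IsStarForest (G.induce {v | c v = i ∨ c v = j})

def StarColorable {V : Type*} (G : SimpleGraph V) (k : ℕ) : Prop :=
  ∃ c : V → Fin k, IsStarColoring G c

def MadLt {V : Type*} (G : SimpleGraph V) (q : ℚ) : Prop :=
  ∀ H : G.Subgraph, H.verts.Nonempty →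
    (2 * (Nat.card H.edgeSet : ℚ)) / (H.verts.ncard : ℚ) < q


namespace IFP

open Finset Classical

variable {V : Type*}

/-- adjacency indicator -/
noncomputable def ad (G : SimpleGraph V) (x y : V) : ℤ := if G.Adj x y then 1 else 0

/-- number of neighbours of `v` in `B` -/
noncomputable def nn (G : SimpleGraph V) (v : V) (B : Finset V) : ℤ := ∑ y ∈ B, ad G v y

/-- number of ordered adjacent pairs in `A × B` -/
noncomputable def cr (G : SimpleGraph V) (A B : Finset V) : ℤ := ∑ x ∈ A, nn G x B

/-- the potential -/
noncomputable def rr (G : SimpleGraph V) (w : V → ℤ) (A : Finset V) : ℤ :=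
  ∑ x ∈ A, w x - 2 * cr G A A

theorem ad_nonneg (G : SimpleGraph V) (x y : V) : 0 ≤ ad G x y := by
  unfold ad; split_ifs <;> simp

theorem ad_comm (G : SimpleGraph V) (x y : V) : ad G x y = ad G y x := by
  unfold ad; simp [G.adj_comm]

theorem nn_nonneg (G : SimpleGraph V) (v : V) (B : Finset V) : 0 ≤ nn G v B :=
  Finset.sum_nonneg fun _ _ => ad_nonneg _ _ _

theorem cr_nonneg (G : SimpleGraph V) (A B : Finset V) : 0 ≤ cr G A B :=
  Finset.sum_nonneg fun _ _ => nn_nonneg _ _ _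

theorem nn_card (G : SimpleGraph V) (v : V) (B : Finset V) :
    nn G v B = ((B.filter (G.Adj v)).card : ℤ) := by
  unfold nn ad; simp

theorem nn_mono (G : SimpleGraph V) (v : V) {B C : Finset V} (h : B ⊆ C) :
    nn G v B ≤ nn G v C :=
  Finset.sum_le_sum_of_subset_of_nonneg h fun _ _ _ => ad_nonneg _ _ _

theorem nn_union (G : SimpleGraph V) (v : V) {B C : Finset V} (h : Disjoint B C) :
    nn G v (B ∪ C) = nn G v B + nn G v C := Finset.sum_union h

theorem cr_union_left (G : SimpleGraph V) {A B : Finset V} (C : Finset V) (h : Disjoint A B) :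
    cr G (A ∪ B) C = cr G A C + cr G B C := Finset.sum_union h

theorem cr_union_right (G : SimpleGraph V) (C : Finset V) {A B : Finset V} (h : Disjoint A B) :
    cr G C (A ∪ B) = cr G C A + cr G C B := by
  unfold cr; rw [← Finset.sum_add_distrib]
  exact Finset.sum_congr rfl fun x _ => nn_union G x h

theorem cr_comm (G : SimpleGraph V) (A B : Finset V) : cr G A B = cr G B A := by
  unfold cr nn; rw [Finset.sum_comm]
  exact Finset.sum_congr rfl fun x _ => Finset.sum_congr rfl fun y _ => ad_comm _ _ _

theorem cr_mono_right (G : SimpleGraph V) (A : Finset V) {B C : Finset V} (h : B ⊆ C) :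
    cr G A B ≤ cr G A C := Finset.sum_le_sum fun x _ => nn_mono G x h

theorem cr_singleton (G : SimpleGraph V) (v : V) (B : Finset V) : cr G {v} B = nn G v B := by
  simp [cr]

theorem cr_union_self (G : SimpleGraph V) {A B : Finset V} (h : Disjoint A B) :
    cr G (A ∪ B) (A ∪ B) = cr G A A + cr G B B + 2 * cr G A B := by
  rw [cr_union_left _ _ h, cr_union_right _ _ h, cr_union_right _ _ h, cr_comm G B A]; ring

theorem nn_self (G : SimpleGraph V) (v : V) : nn G v {v} = 0 := by simp [nn, ad]

theorem cr_insert (G : SimpleGraph V) {v : V} {B : Finset V} (h : v ∉ B) :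
    cr G (insert v B) (insert v B) = cr G B B + 2 * nn G v B := by
  rw [Finset.insert_eq, cr_union_self _ (by simpa using h), cr_singleton, cr_singleton, nn_self]
  ring

theorem rr_union (G : SimpleGraph V) (w : V → ℤ) {A B : Finset V} (h : Disjoint A B) :
    rr G w (A ∪ B) = rr G w A + rr G w B - 4 * cr G A B := by
  unfold rr; rw [cr_union_self _ h, Finset.sum_union h]; ring

theorem rr_insert (G : SimpleGraph V) (w : V → ℤ) {v : V} {B : Finset V} (h : v ∉ B) :
    rr G w (insert v B) = rr G w B + w v - 4 * nn G v B := by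
  unfold rr; rw [cr_insert _ h, Finset.sum_insert h]; ring

theorem rr_singleton (G : SimpleGraph V) (w : V → ℤ) (v : V) : rr G w {v} = w v := by
  simp [rr, cr_singleton, nn_self]

theorem cr_even (G : SimpleGraph V) (B : Finset V) : ∃ k : ℤ, cr G B B = 2 * k := by
  induction B using Finset.induction_on with
  | empty => exact ⟨0, by simp [cr]⟩
  | insert v B h ih =>
    obtain ⟨k, hk⟩ := ih
    exact ⟨k + nn G v B, by rw [cr_insert _ h, hk]; ring⟩

theorem nn_pos {G : SimpleGraph V} {v x : V} {B : Finset V} (hx : x ∈ B) (h : G.Adj v x) :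
    1 ≤ nn G v B := by
  rw [nn_card]
  have : 0 < (B.filter (G.Adj v)).card := Finset.card_pos.2 ⟨x, by simp [hx, h]⟩
  omega

theorem nn_two {G : SimpleGraph V} {v x y : V} {B : Finset V} (hx : x ∈ B) (h : G.Adj v x)
    (hy : y ∈ B) (h' : G.Adj v y) (hxy : x ≠ y) : 2 ≤ nn G v B := by
  rw [nn_card]
  have : 1 < (B.filter (G.Adj v)).card :=
    Finset.one_lt_card.2 ⟨x, by simp [hx, h], y, by simp [hy, h'], hxy⟩
  omega

theorem nn_le_one {G : SimpleGraph V} {v : V} (x : V) {B : Finset V}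
    (h : ∀ y ∈ B, G.Adj v y → y = x) : nn G v B ≤ 1 := by
  rw [nn_card]
  have : (B.filter (G.Adj v)).card ≤ 1 := by
    rw [Finset.card_le_one]
    intro a ha b hb
    simp only [Finset.mem_filter] at ha hb
    rw [h a ha.1 ha.2, h b hb.1 hb.2]
  omega

theorem nn_zero {G : SimpleGraph V} {v : V} {B : Finset V}
    (h : ∀ y ∈ B, ¬ G.Adj v y) : nn G v B = 0 := by
  rw [nn_card, Finset.filter_eq_empty_iff.2 (fun y hy => h y hy)]; simp

theorem nn_le_one_iff {G : SimpleGraph V} {v : V} {B : Finset V} (h : nn G v B ≤ 1)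
    {x y : V} (hx : x ∈ B) (hy : y ∈ B) (hvx : G.Adj v x) (hvy : G.Adj v y) : x = y := by
  by_contra hne
  have := nn_two hx hvx hy hvy hne
  omega

/-- forest condition -/
def For (G : SimpleGraph V) (Y : Finset V) : Prop :=
  ∀ B ⊆ Y, B.Nonempty → cr G B B ≤ 2 * (B.card : ℤ) - 2

theorem For.mono {G : SimpleGraph V} {Y Z : Finset V} (h : For G Y) (hZ : Z ⊆ Y) : For G Z :=
  fun B hB hne => h B (hB.trans hZ) hne

theorem For.insert {G : SimpleGraph V} {Y : Finset V} {v : V} (h : For G Y)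
    (hv : nn G v Y ≤ 1) : For G (insert v Y) := by
  intro B hB hne
  by_cases hvB : v ∈ B
  · obtain ⟨B', hvB', rfl⟩ : ∃ B', v ∉ B' ∧ B = Insert.insert v B' :=
      ⟨B.erase v, by simp, by simp [Finset.insert_erase hvB]⟩
    have hB' : B' ⊆ Y := by
      intro x hx
      have := hB (Finset.mem_insert_of_mem hx)
      rcases Finset.mem_insert.1 this with rfl | h1
      · exact absurd hx hvB'
      · exact h1
    rw [cr_insert _ hvB', Finset.card_insert_of_notMem hvB']
    have h1 := nn_mono G v hB'
    rcases B'.eq_empty_or_nonempty with rfl | hne'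
    · simp [cr, nn]
    · have := h B' hB' hne'
      push_cast; linarith
  · refine h B ?_ hne
    intro x hx
    rcases Finset.mem_insert.1 (hB hx) with rfl | h1
    · exact absurd hx hvB
    · exact h1

theorem For.union {G : SimpleGraph V} {Y K : Finset V} (h : For G Y)
    (hK : ∀ a ∈ K, nn G a (Y ∪ K) ≤ 1) : For G (Y ∪ K) := by
  have : ∀ K' ⊆ K, For G (Y ∪ K') := by
    intro K'
    induction K' using Finset.induction_on with
    | empty => intro _; simpa using h
    | insert v B _ ih =>
      intro hs
      have h1 := ih (fun x hx => hs (Finset.mem_insert_of_mem hx))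
      rw [Finset.union_insert]
      refine h1.insert ?_
      have h2 := hK v (hs (Finset.mem_insert_self _ _))
      refine le_trans (nn_mono G v ?_) h2
      exact Finset.union_subset_union_right (fun x hx => hs (Finset.mem_insert_of_mem hx))
  exact this K (Finset.Subset.refl _)

/-- valid extension of the labels (`5` free, `4` forest, `1` independent) -/
structure Ok (G : SimpleGraph V) (w : V → ℤ) (X S : Finset V) : Prop where
  sub : S ⊆ X
  one : ∀ v ∈ X, w v = 1 → v ∈ S
  four : ∀ v ∈ X, w v = 4 → v ∉ S
  fo : For G (X \ S)
  ind : ∀ s ∈ S, ∀ t ∈ S, s ≠ t → ¬ G.Adj s t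
  ind2 : ∀ s ∈ S, ∀ t ∈ S, s ≠ t → ∀ z ∈ X, G.Adj z s → G.Adj z t → False

structure Sp (G : SimpleGraph V) (w : V → ℤ) (X : Finset V) : Prop where
  val : ∀ v ∈ X, w v = 1 ∨ w v = 4 ∨ w v = 5
  pos : ∀ A ⊆ X, A.Nonempty → 1 ≤ rr G w A

noncomputable def ms (w : V → ℤ) (X : Finset V) : ℕ := ∑ v ∈ X, if w v = 5 then 2 else 1

/-- minimal counterexample -/
structure MC (G : SimpleGraph V) (w : V → ℤ) (X : Finset V) : Prop where
  sp : Sp G w X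
  ih : ∀ (G' : SimpleGraph V) (w' : V → ℤ) (X' : Finset V), ms w' X' < ms w X →
    Sp G' w' X' → ∃ S, Ok G' w' X' S
  no : ∀ S, ¬ Ok G w X S

theorem rr_congr {G : SimpleGraph V} {w w' : V → ℤ} {A : Finset V}
    (h : ∀ v ∈ A, w v = w' v) : rr G w A = rr G w' A := by
  unfold rr; rw [Finset.sum_congr rfl h]

theorem Sp.mono {G : SimpleGraph V} {w : V → ℤ} {X Y : Finset V} (h : Sp G w X) (hY : Y ⊆ X) :
    Sp G w Y := ⟨fun v hv => h.val v (hY hv), fun A hA hne => h.pos A (hA.trans hY) hne⟩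

theorem ms_lt {w w' : V → ℤ} {X X' : Finset V} (h : X' ⊂ X)
    (hw : ∀ v ∈ X', w' v = 5 → w v = 5) : ms w' X' < ms w X := by
  unfold ms
  calc ∑ v ∈ X', (if w' v = 5 then 2 else 1) ≤ ∑ v ∈ X', (if w v = 5 then 2 else 1) := by
        refine Finset.sum_le_sum fun v hv => ?_
        have := hw v hv
        split_ifs <;> simp_all
    _ < ∑ v ∈ X, (if w v = 5 then 2 else 1) := by
        obtain ⟨x, hx, hx'⟩ := Finset.exists_of_ssubset h
        refine Finset.sum_lt_sum_of_subset h.1 hx hx' ?_ ?_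
        · split_ifs <;> simp
        · intros; split_ifs <;> simp

/-- two independent vertices in a sparse labelled graph are far apart -/
theorem Sp.one_one {G : SimpleGraph V} {w : V → ℤ} {X : Finset V} (h : Sp G w X)
    {s t : V} (hs : s ∈ X) (ht : t ∈ X) (hst : s ≠ t) (ws : w s = 1) (wt : w t = 1) :
    ¬ G.Adj s t := by
  intro hadj
  have h1 := h.pos {s, t} (by grind) (by simp)
  rw [rr_insert _ _ (by simpa using hst), rr_singleton] at h1
  have := nn_pos (B := {t}) (by simp) hadj
  linarith

theorem Sp.one_two {G : SimpleGraph V} {w : V → ℤ} {X : Finset V} (h : Sp G w X)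
    {s t z : V} (hs : s ∈ X) (ht : t ∈ X) (hz : z ∈ X) (hst : s ≠ t) (ws : w s = 1) (wt : w t = 1)
    (h1 : G.Adj z s) (h2 : G.Adj z t) : False := by
  have h3 := h.pos {z, s, t} (by grind) (by simp)
  have hzs := h1.ne
  have hzt := h2.ne
  rw [rr_insert _ _ (by simp [hzs, hzt]), rr_insert _ _ (by simpa using hst), rr_singleton] at h3
  have := nn_two (B := {s, t}) (by simp) h1 (by simp) h2 hst
  have := nn_nonneg G s {t}
  rcases h.val z hz with h | h | h <;> linarith

theorem Sp.noU {G : SimpleGraph V} {w : V → ℤ} {X : Finset V} (h : Sp G w X)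
    (hU : ∀ v ∈ X, w v ≠ 5) : Ok G w X (X.filter (fun v => w v = 1)) := by
  refine ⟨by simp, by simp +contextual, ?_, ?_, ?_, ?_⟩
  · intro v hv h4; simp [h4]
  · intro B hB hne
    have h1 := h.pos B (hB.trans (by simp)) hne
    obtain ⟨k, hk⟩ := cr_even G B
    have h2 : ∑ x ∈ B, w x = 4 * (B.card : ℤ) := by
      rw [Finset.sum_congr rfl (g := fun _ => (4 : ℤ))]
      · simp; ring
      · intro x hx
        have := hB hx
        simp only [mem_sdiff, mem_filter] at this
        have := h.val x this.1
        have := hU x (by grind)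
        grind
    unfold rr at h1
    rw [h2] at h1
    omega
  · intro s hs t ht hst
    simp only [mem_filter] at hs ht
    exact h.one_one hs.1 ht.1 hst hs.2 ht.2
  · intro s hs t ht hst z hz
    simp only [mem_filter] at hs ht
    exact h.one_two hs.1 ht.1 hz hst hs.2 ht.2


/-- the vertices represented by `y` after contracting `A` -/
noncomputable def cls (A SA : Finset V) (i u y : V) : Finset V :=
  if y = i then SA else if y = u then A \ SA else {y}

/-- the contracted graph: `SA` becomes `i`, `A \ SA` becomes `u` -/
def CG (G : SimpleGraph V) (A SA : Finset V) (i u : V) : SimpleGraph V where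
  Adj x y := x ≠ y ∧ ((x = i ∧ y = u) ∨ (x = u ∧ y = i) ∨
    ∃ s ∈ cls A SA i u x, ∃ t ∈ cls A SA i u y, G.Adj s t)
  symm := ⟨by
    rintro x y ⟨h, h1 | h1 | ⟨s, hs, t, ht, h1⟩⟩
    · exact ⟨h.symm, Or.inr (Or.inl ⟨h1.2, h1.1⟩)⟩
    · exact ⟨h.symm, Or.inl ⟨h1.2, h1.1⟩⟩
    · exact ⟨h.symm, Or.inr (Or.inr ⟨t, ht, s, hs, h1.symm⟩)⟩⟩
  loopless := ⟨fun x h => h.1 rfl⟩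

section contraction

variable {G : SimpleGraph V} {A SA : Finset V} {i u : V}

theorem CG_oo (hi : i ∈ A) (hu : u ∈ A) {x y : V} (hx : x ∉ A) (hy : y ∉ A) :
    (CG G A SA i u).Adj x y ↔ G.Adj x y := by
  have h1 : x ≠ i := by grind
  have h2 : x ≠ u := by grind
  have h3 : y ≠ i := by grind
  have h4 : y ≠ u := by grind
  simp only [CG, cls, h1, h2, h3, h4]
  simp
  exact fun h => h.ne

theorem CG_oi (hi : i ∈ A) (hu : u ∈ A) {x : V} (hx : x ∉ A) :
    (CG G A SA i u).Adj x i ↔ ∃ t ∈ SA, G.Adj x t := by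
  have h1 : x ≠ i := by grind
  have h2 : x ≠ u := by grind
  simp only [CG, cls, h1, h2]
  simp
  intros; exact h1

theorem CG_ou (hi : i ∈ A) (hu : u ∈ A) (hiu : i ≠ u) {x : V} (hx : x ∉ A) :
    (CG G A SA i u).Adj x u ↔ ∃ t ∈ A \ SA, G.Adj x t := by
  have h1 : x ≠ i := by grind
  have h2 : x ≠ u := by grind
  simp only [CG, cls, h1, h2, hiu.symm]
  simp
  intros; exact h2

theorem CG_iu (hiu : i ≠ u) : (CG G A SA i u).Adj i u := by
  simp [CG, hiu]

theorem CG_cr (hi : i ∈ A) (hu : u ∈ A) {B : Finset V} (hB : Disjoint B A) :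
    cr (CG G A SA i u) B B = cr G B B := by
  unfold cr nn ad
  refine Finset.sum_congr rfl fun x hx => Finset.sum_congr rfl fun y hy => ?_
  rw [CG_oo hi hu (Finset.disjoint_left.1 hB hx) (Finset.disjoint_left.1 hB hy)]

theorem CG_rr (hi : i ∈ A) (hu : u ∈ A) {w w' : V → ℤ} {B : Finset V} (hB : Disjoint B A)
    (hw : ∀ v ∉ A, w' v = w v) : rr (CG G A SA i u) w' B = rr G w B := by
  unfold rr
  rw [CG_cr hi hu hB, Finset.sum_congr rfl fun x hx => hw x (Finset.disjoint_left.1 hB hx)]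

theorem CG_ni (hi : i ∈ A) (hu : u ∈ A) {B : Finset V} (hB : Disjoint B A) :
    nn (CG G A SA i u) i B ≤ cr G B SA := by
  unfold cr
  rw [nn]
  refine Finset.sum_le_sum fun x hx => ?_
  unfold ad
  split_ifs with h
  · rw [SimpleGraph.adj_comm, CG_oi hi hu (Finset.disjoint_left.1 hB hx)] at h
    obtain ⟨t, ht, h⟩ := h
    exact nn_pos ht h
  · exact nn_nonneg _ _ _

theorem CG_nu (hi : i ∈ A) (hu : u ∈ A) (hiu : i ≠ u) {B : Finset V} (hB : Disjoint B A) :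
    nn (CG G A SA i u) u B ≤ cr G B (A \ SA) := by
  unfold cr
  rw [nn]
  refine Finset.sum_le_sum fun x hx => ?_
  unfold ad
  split_ifs with h
  · rw [SimpleGraph.adj_comm, CG_ou hi hu hiu (Finset.disjoint_left.1 hB hx)] at h
    obtain ⟨t, ht, h⟩ := h
    exact nn_pos ht h
  · exact nn_nonneg _ _ _

theorem CG_ok {w w' : V → ℤ} {X S' : Finset V} (hi : i ∈ A) (hu : u ∈ A) (hiu : i ≠ u)
    (hA : A ⊆ X) (hOk : Ok G w A SA) (hone : ∀ x ∈ X \ A, nn G x A ≤ 1)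
    (hwi : w' i = 1) (hw : ∀ v ∉ A, w' v = w v)
    (h' : Ok (CG G A SA i u) w' ((X \ A) ∪ {i, u}) S') : Ok G w X ((S' \ A) ∪ SA) := by
  have hiS : i ∈ S' := h'.one i (by simp) hwi
  have huS : u ∉ S' := fun h => h'.ind i hiS u h hiu (CG_iu hiu)
  have hSA := hOk.sub
  have hS' := h'.sub
  refine ⟨?_, ?_, ?_, ?_, ?_, ?_⟩
  · intro x hx
    simp only [mem_union, mem_sdiff] at hx
    rcases hx with ⟨h1, h2⟩ | h1
    · have := hS' h1
      grind
    · exact hA (hSA h1)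
  · intro v hv h1
    by_cases hvA : v ∈ A
    · have := hOk.one v hvA h1
      grind
    · have := h'.one v (by grind) (by rw [hw v hvA, h1])
      grind
  · intro v hv h1
    by_cases hvA : v ∈ A
    · have := hOk.four v hvA h1
      grind
    · have := h'.four v (by grind) (by rw [hw v hvA, h1])
      grind
  · intro B hB hne
    have hd2 : Disjoint (B \ A) A := Finset.sdiff_disjoint
    have hBe : B = (B \ A) ∪ (B ∩ A) := by grind
    have hd : Disjoint (B \ A) (B ∩ A) := by
      rw [Finset.disjoint_left]; grind
    have hB2 : B \ A ⊆ ((X \ A) ∪ {i, u}) \ S' := by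
      intro x hx
      simp only [mem_sdiff] at hx
      have h1 := hB hx.1
      simp only [mem_sdiff, mem_union] at h1 ⊢
      grind
    rcases (B ∩ A).eq_empty_or_nonempty with he | hne1
    · have : B = B \ A := by rw [he] at hBe; simpa using hBe
      have h1 := h'.fo (B \ A) hB2 (this ▸ hne)
      rw [CG_cr hi hu hd2] at h1
      rwa [← this] at h1
    · have h1 : insert u (B \ A) ⊆ ((X \ A) ∪ {i, u}) \ S' := by
        intro x hx
        rcases Finset.mem_insert.1 hx with rfl | hx
        · simp [huS]
        · exact hB2 hx
      have h2 := h'.fo _ h1 (by simp)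
      have huB : u ∉ B \ A := by simp [hu]
      rw [cr_insert _ huB, CG_cr hi hu hd2, Finset.card_insert_of_notMem huB] at h2
      have h3 : B ∩ A ⊆ A \ SA := by
        intro x hx
        have := hB (Finset.mem_inter.1 hx).1
        grind
      have h4 := hOk.fo (B ∩ A) h3 hne1
      have h5 : cr G (B \ A) (B ∩ A) ≤ nn (CG G A SA i u) u (B \ A) := by
        unfold cr
        rw [nn.eq_def (CG G A SA i u)]
        refine Finset.sum_le_sum fun x hx => ?_
        have hxA : x ∉ A := (Finset.mem_sdiff.1 hx).2
        have hxX : x ∈ X \ A := by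
          have := hB (Finset.mem_sdiff.1 hx).1
          grind
        rw [ad_comm]
        unfold ad
        rw [CG_ou hi hu hiu hxA]
        split_ifs with h
        · exact le_trans (nn_mono G x Finset.inter_subset_right) (hone x hxX)
        · push Not at h
          rw [nn_zero fun y hy => h y (h3 hy)]
      rw [hBe, cr_union_self _ hd, Finset.card_union_of_disjoint hd]
      push_cast at h2 ⊢
      linarith
  · intro s hs t ht hst hadj
    have key : ∀ s t, s ∈ SA → t ∈ S' → t ∉ A → ¬ G.Adj t s := by
      intro s t hs ht htA h
      exact h'.ind t ht i hiS (by grind) ((CG_oi hi hu htA).2 ⟨s, hs, h⟩)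
    simp only [mem_union, mem_sdiff] at hs ht
    rcases hs with ⟨h1, h2⟩ | h1 <;> rcases ht with ⟨h3, h4⟩ | h3
    · exact h'.ind s h1 t h3 hst ((CG_oo hi hu h2 h4).2 hadj)
    · exact key t s h3 h1 h2 hadj
    · exact key s t h1 h3 h4 hadj.symm
    · exact hOk.ind s h1 t h3 hst hadj
  · have key : ∀ s t, s ∈ SA → t ∈ S' → t ∉ A → ∀ z ∈ X, G.Adj z s → G.Adj z t → False := by
      intro s t hs ht htA z hz h1 h2
      have hti : t ≠ i := by grind
      by_cases hzA : z ∈ A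
      · have hzS : z ∉ SA := by
          intro hzS
          exact hOk.ind z hzS s hs h1.ne h1
        exact h'.ind2 t ht i hiS hti u (by simp)
          ((CG_ou hi hu hiu htA).2 ⟨z, by simp [hzA, hzS], h2.symm⟩).symm (CG_iu hiu).symm
      · exact h'.ind2 t ht i hiS hti z (by simp [hz, hzA])
          ((CG_oo hi hu hzA htA).2 h2) ((CG_oi hi hu hzA).2 ⟨s, hs, h1⟩)
    intro s hs t ht hst z hz hzs hzt
    simp only [mem_union, mem_sdiff] at hs ht
    rcases hs with ⟨h1, h2⟩ | h1 <;> rcases ht with ⟨h3, h4⟩ | h3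
    · by_cases hzA : z ∈ A
      · by_cases hzS : z ∈ SA
        · exact h'.ind s h1 i hiS (by grind) ((CG_oi hi hu h2).2 ⟨z, hzS, hzs.symm⟩)
        · exact h'.ind2 s h1 t h3 hst u (by simp)
            ((CG_ou hi hu hiu h2).2 ⟨z, by simp [hzA, hzS], hzs.symm⟩).symm
            ((CG_ou hi hu hiu h4).2 ⟨z, by simp [hzA, hzS], hzt.symm⟩).symm
      · exact h'.ind2 s h1 t h3 hst z (by simp [hz, hzA])
            ((CG_oo hi hu hzA h2).2 hzs) ((CG_oo hi hu hzA h4).2 hzt)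
    · exact key t s h3 h1 h2 z hz hzt hzs
    · exact key s t h1 h3 h4 z hz hzs hzt
    · by_cases hzA : z ∈ A
      · exact hOk.ind2 s h1 t h3 hst z hzA hzs hzt
      · exact hst (nn_le_one_iff (hone z (by simp [hz, hzA])) (hSA h1) (hSA h3) hzs hzt)

/-- potential of the contracted graph -/
theorem CG_pos {w w' : V → ℤ} {X C : Finset V} (hi : i ∈ A) (hu : u ∈ A) (hiu : i ≠ u)
    (hSA : SA ⊆ A) (hC : C ⊆ (X \ A) ∪ {i, u}) (hwi : w' i = 1) (hw : ∀ v ∉ A, w' v = w v) :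
    ∃ B ⊆ X \ A, rr G w (B ∪ A) = rr G w B + rr G w A - 4 * cr G B SA - 4 * cr G B (A \ SA) ∧
      ((C = B) ∨
       (C = insert i B ∧ rr G w B + 1 - 4 * cr G B SA ≤ rr (CG G A SA i u) w' C) ∨
       (C = insert u B ∧ rr G w B + w' u - 4 * cr G B (A \ SA) ≤ rr (CG G A SA i u) w' C) ∨
       (C = insert i (insert u B) ∧ rr G w B + w' u + 1 - 4 - 4 * cr G B SA -
          4 * cr G B (A \ SA) ≤ rr (CG G A SA i u) w' C)) := by
  have hd : Disjoint (C \ A) A := Finset.sdiff_disjoint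
  have hiB : i ∉ C \ A := by simp [hi]
  have huB : u ∉ C \ A := by simp [hu]
  have hC' : ∀ x ∈ C, x ∈ A → x = i ∨ x = u := by
    intro x hx hxA
    have := hC hx
    grind
  refine ⟨C \ A, ?_, ?_, ?_⟩
  · intro x hx
    have := hC (Finset.mem_sdiff.1 hx).1
    grind
  · rw [rr_union _ _ hd]
    have h1 : Disjoint SA (A \ SA) := Finset.disjoint_sdiff
    have h2 : A = SA ∪ (A \ SA) := by rw [Finset.union_sdiff_of_subset hSA]
    have h3 := cr_union_right G (C \ A) h1
    rw [← h2] at h3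
    linarith
  · have hni := CG_ni (G := G) (SA := SA) hi hu hd
    have hnu := CG_nu (G := G) (SA := SA) hi hu hiu hd
    have hr := CG_rr (G := G) (SA := SA) hi hu hd hw
    by_cases h1 : i ∈ C <;> by_cases h2 : u ∈ C
    · right; right; right
      have he : C = insert i (insert u (C \ A)) := by
        ext x
        have := hC' x
        grind
      refine ⟨he, ?_⟩
      have hi2 : i ∉ insert u (C \ A) := by simp [hiu, hi]
      rw [he, rr_insert _ _ hi2, rr_insert _ _ (by simp [hu])]
      rw [← he, hr, hwi, Finset.insert_eq, nn_union _ _ (by simp [hu])]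
      have : nn (CG G A SA i u) i {u} = 1 := by
        rw [nn, Finset.sum_singleton, ad, if_pos (CG_iu hiu)]
      rw [this]
      linarith
    · right; left
      have he : C = insert i (C \ A) := by
        ext x
        have := hC' x
        grind
      refine ⟨he, ?_⟩
      rw [he, rr_insert _ _ (by simp [hi])]
      rw [← he, hr, hwi]
      linarith
    · right; right; left
      have he : C = insert u (C \ A) := by
        ext x
        have := hC' x
        grind
      refine ⟨he, ?_⟩
      rw [he, rr_insert _ _ (by simp [hu])]
      rw [← he, hr]
      linarith
    · left
      ext x
      have := hC' x
      grind

end contraction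


/-- relabel `z` as a forest vertex -/
noncomputable def lab (w : V → ℤ) (z : V) : V → ℤ := fun v => if v = z ∧ w v = 5 then 4 else w v

theorem rr_lab (G : SimpleGraph V) (w : V → ℤ) (z : V) (A : Finset V) :
    rr G (lab w z) A = rr G w A - (if z ∈ A ∧ w z = 5 then 1 else 0) := by
  have h : ∑ x ∈ A, lab w z x = ∑ x ∈ A, w x - (if z ∈ A ∧ w z = 5 then 1 else 0) := by
    have : ∀ x ∈ A, lab w z x = w x - (if x = z then (if w z = 5 then 1 else 0) else 0) := by
      intro x _
      unfold lab
      grind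
    rw [Finset.sum_congr rfl this, Finset.sum_sub_distrib, Finset.sum_ite_eq']
    grind
  unfold rr
  rw [h]; ring

theorem Ok.unlab {G : SimpleGraph V} {w : V → ℤ} {z : V} {X S : Finset V}
    (h : Ok G (lab w z) X S) : Ok G w X S := by
  refine ⟨h.sub, ?_, ?_, h.fo, h.ind, h.ind2⟩
  · intro v hv h1
    exact h.one v hv (by simp [lab, h1])
  · intro v hv h1
    exact h.four v hv (by simp [lab, h1])

theorem Ok.lab_not {G : SimpleGraph V} {w : V → ℤ} {z : V} {X S : Finset V}
    (h : Ok G (lab w z) X S) (hz : z ∈ X) (hwz : w z = 4 ∨ w z = 5) : z ∉ S := by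
  refine h.four z hz ?_
  unfold lab; grind

theorem ms_union (w : V → ℤ) {A B : Finset V} (h : Disjoint A B) :
    ms w (A ∪ B) = ms w A + ms w B := Finset.sum_union h

theorem ms_congr {w w' : V → ℤ} {A : Finset V} (h : ∀ v ∈ A, w v = w' v) :
    ms w A = ms w' A := Finset.sum_congr rfl fun v hv => by rw [h v hv]

theorem ms_card (w : V → ℤ) (A : Finset V) : A.card ≤ ms w A := by
  unfold ms
  rw [Finset.card_eq_sum_ones]
  refine Finset.sum_le_sum fun v _ => ?_
  split_ifs <;> simp

theorem ms_card5 {w : V → ℤ} {A : Finset V} {u : V} (hu : u ∈ A) (h : w u = 5) :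
    A.card + 1 ≤ ms w A := by
  have h1 : A = insert u (A.erase u) := by rw [Finset.insert_erase hu]
  have h2 : ms w A = 2 + ms w (A.erase u) := by
    rw [h1]; unfold ms
    rw [Finset.sum_insert (by simp)]; simp [h]
  have := ms_card w (A.erase u)
  rw [Finset.card_erase_of_mem hu] at this
  have : 0 < A.card := Finset.card_pos.2 ⟨u, hu⟩
  omega

theorem ms_contract {w w' : V → ℤ} {X A : Finset V} {i u : V} (hA : A ⊆ X) (hi : i ∈ A)
    (hu : u ∈ A) (hiu : i ≠ u) (hwi : w' i = 1) (hw : ∀ v ∉ A, w' v = w v) :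
    ms w' ((X \ A) ∪ {i, u}) + ms w A = ms w X + (1 + if w' u = 5 then 2 else 1) := by
  have h1 : Disjoint (X \ A) ({i, u} : Finset V) := by
    rw [Finset.disjoint_left]; grind
  have h2 : Disjoint (X \ A) A := Finset.sdiff_disjoint
  have h3 : X = (X \ A) ∪ A := by rw [Finset.sdiff_union_of_subset hA]
  have h4 : ms w X = ms w (X \ A) + ms w A := by
    conv_lhs => rw [h3]
    exact ms_union w h2
  rw [ms_union _ h1, h4, ms_congr (w := w') (w' := w) (A := X \ A) (fun v hv => hw v (by grind))]
  have : ms w' {i, u} = 1 + if w' u = 5 then 2 else 1 := by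
    unfold ms
    rw [Finset.sum_insert (by simpa using hiu), Finset.sum_singleton, hwi]
    simp
  omega

theorem Sp.nn_le {G : SimpleGraph V} {w : V → ℤ} {X A : Finset V} (h : Sp G w X) (hA : A ⊆ X)
    (hr : rr G w A ≤ 3) : ∀ x ∈ X \ A, nn G x A ≤ 1 := by
  intro x hx
  simp only [mem_sdiff] at hx
  have h1 := h.pos (insert x A) (by grind) (by simp)
  rw [rr_insert _ _ hx.2] at h1
  rcases h.val x hx.1 with h | h | h <;> omega

theorem MC.gap2 {G : SimpleGraph V} {w : V → ℤ} {X A : Finset V} (h : MC G w X) (hA : A ⊂ X)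
    {z : V} (hz : z ∈ A) (hwz : w z = 5) : 2 ≤ rr G w A := by
  by_contra hlt
  have hpos := h.sp.pos A hA.1 ⟨z, hz⟩
  have hr : rr G w A = 1 := by omega
  have hcard : 1 < A.card := by
    by_contra hc
    have h1 : A = {z} := by
      refine Finset.eq_singleton_iff_unique_mem.2 ⟨hz, fun x hx => ?_⟩
      exact Finset.card_le_one.1 (by omega) x hx z hz
    rw [h1, rr_singleton, hwz] at hr
    omega
  obtain ⟨i, hi, u, hu, hiu⟩ := Finset.one_lt_card.1 hcard
  obtain ⟨SA, hSA⟩ := h.ih G w A (ms_lt hA fun _ _ h => h) (h.sp.mono hA.1)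
  set w' : V → ℤ := fun v => if v = i then 1 else if v = u then 4 else w v with hw'
  have hwi : w' i = 1 := by simp [hw']
  have hwu : w' u = 4 := by simp [hw', hiu.symm]
  have hw : ∀ v ∉ A, w' v = w v := by
    intro v hv
    have : v ≠ i := by grind
    have : v ≠ u := by grind
    simp [hw', *]
  have hms : ms w' ((X \ A) ∪ {i, u}) < ms w X := by
    have h1 := ms_contract hA.1 hi hu hiu hwi hw
    rw [hwu] at h1
    have h2 := ms_card5 hz hwz
    rw [if_neg (by norm_num)] at h1
    omega
  obtain ⟨S', hS'⟩ := h.ih (CG G A SA i u) w' _ hms (by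
    refine ⟨?_, ?_⟩
    · intro v hv
      by_cases hvA : v ∈ A
      · have : v = i ∨ v = u := by grind
        rcases this with rfl | rfl
        · exact Or.inl hwi
        · exact Or.inr (Or.inl hwu)
      · rw [hw v hvA]
        exact h.sp.val v (by grind)
    · intro C hC hne
      obtain ⟨B, hB, hBA, hcase⟩ := CG_pos (G := G) hi hu hiu hSA.sub hC hwi hw
      have hBAX : B ∪ A ⊆ X := by
        intro x hx
        rcases Finset.mem_union.1 hx with hx | hx
        · exact (Finset.mem_sdiff.1 (hB hx)).1
        · exact hA.1 hx
      have h1 := h.sp.pos (B ∪ A) hBAX ⟨z, by simp [hz]⟩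
      have h2 := cr_nonneg G B SA
      have h3 := cr_nonneg G B (A \ SA)
      rw [hwu] at hcase
      rcases hcase with h4 | ⟨-, h4⟩ | ⟨-, h4⟩ | ⟨-, h4⟩
      · have hd : Disjoint C A := by
          rw [Finset.disjoint_left]
          intro x hx; rw [h4] at hx; exact (Finset.mem_sdiff.1 (hB hx)).2
        rw [CG_rr hi hu hd hw]
        exact h.sp.pos C (by rw [h4]; exact hB.trans Finset.sdiff_subset) hne
      · linarith
      · linarith
      · linarith)
  exact h.no _ (CG_ok hi hu hiu hA.1 hSA (h.sp.nn_le hA.1 (by omega)) hwi hw hS')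

theorem MC.sp_lab {G : SimpleGraph V} {w : V → ℤ} {X X' : Finset V} (h : MC G w X) (hX' : X' ⊂ X)
    (z : V) : Sp G (lab w z) X' := by
  refine ⟨?_, ?_⟩
  · intro v hv
    have := h.sp.val v (hX'.1 hv)
    unfold lab; grind
  · intro A hA hne
    rw [rr_lab]
    have h1 := h.sp.pos A (hA.trans hX'.1) hne
    split_ifs with h2
    · have := h.gap2 (lt_of_le_of_lt hA hX') h2.1 h2.2
      omega
    · omega

theorem MC.ok_lab {G : SimpleGraph V} {w : V → ℤ} {X X' : Finset V} (h : MC G w X) (hX' : X' ⊂ X)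
    (z : V) : ∃ S, Ok G (lab w z) X' S :=
  h.ih _ _ _ (ms_lt hX' (by intro v _; unfold lab; grind)) (h.sp_lab hX' z)

theorem MC.ok_sub {G : SimpleGraph V} {w : V → ℤ} {X X' : Finset V} (h : MC G w X) (hX' : X' ⊂ X) :
    ∃ S, Ok G w X' S :=
  h.ih _ _ _ (ms_lt hX' (fun _ _ h => h)) (h.sp.mono hX'.1)

theorem MC.exU {G : SimpleGraph V} {w : V → ℤ} {X : Finset V} (h : MC G w X) :
    ∃ v ∈ X, w v = 5 := by
  by_contra hc
  push Not at hc
  exact h.no _ (h.sp.noU hc)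

theorem MC.rX {G : SimpleGraph V} {w : V → ℤ} {X : Finset V} (h : MC G w X) : rr G w X = 1 := by
  obtain ⟨z, hz, hwz⟩ := h.exU
  have h0 := h.sp.pos X (Finset.Subset.refl _) ⟨z, hz⟩
  by_contra hne
  obtain ⟨S, hS⟩ := h.ih G (lab w z) X (by
      unfold ms
      refine Finset.sum_lt_sum (fun v _ => ?_) ⟨z, hz, ?_⟩
      · unfold lab; split_ifs <;> grind
      · simp [lab, hwz]) (by
      refine ⟨?_, ?_⟩
      · intro v hv
        have := h.sp.val v hv
        unfold lab; grind
      · intro A hA hneA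
        rw [rr_lab]
        have h1 := h.sp.pos A hA hneA
        split_ifs with h2
        · rcases eq_or_ne A X with rfl | hAX
          · omega
          · have := h.gap2 (Finset.ssubset_iff_subset_ne.2 ⟨hA, hAX⟩) h2.1 h2.2
            omega
        · omega)
  exact h.no S hS.unlab

/-- gluing along vertices labelled `1` -/
theorem MC.glue {G : SimpleGraph V} {w : V → ℤ} {X A : Finset V} (h : MC G w X) (hA : A ⊂ X)
    {z : V} (hz : z ∈ A) (hwz : w z = 5) :
    ∃ v ∈ A, w v ≠ 1 ∧ ∃ x ∈ X \ A, G.Adj x v := by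
  by_contra hc
  push Not at hc
  have hb : ∀ v ∈ A, ∀ x ∈ X, x ∉ A → G.Adj x v → w v = 1 := by
    intro v hv x hx hxA hadj
    by_contra hv1
    exact hc v hv hv1 x (by simp [hx, hxA]) hadj
  set Y : Finset V := X.filter (fun v => v ∈ A → w v = 1) with hY
  have hYX : Y ⊂ X := by
    refine Finset.ssubset_iff_subset_ne.2 ⟨Finset.filter_subset _ _, ?_⟩
    intro he
    have : z ∈ Y := he ▸ hA.1 hz
    simp only [hY, mem_filter] at this
    have := this.2 hz
    omega
  obtain ⟨S, hS⟩ := h.ok_sub hA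
  obtain ⟨T, hT⟩ := h.ok_sub hYX
  have hSs := hS.sub
  have hTs := hT.sub
  have hmem : ∀ x, x ∈ Y ↔ x ∈ X ∧ (x ∈ A → w x = 1) := by simp [hY]
  have hTA : ∀ x ∈ T, x ∈ A → x ∈ S := by
    intro x hx hxA
    exact hS.one x hxA (((hmem x).1 (hTs hx)).2 hxA)
  have hAX := hA.1
  have hbS : ∀ v ∈ A, ∀ x ∈ X, x ∉ A → G.Adj x v → v ∈ S ∧ v ∈ T := by
    intro v hv x hx hxA hadj
    have := hb v hv x hx hxA hadj
    exact ⟨hS.one v hv this, hT.one v ((hmem v).2 ⟨hAX hv, fun _ => this⟩) this⟩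
  refine h.no (S ∪ T) ⟨?_, ?_, ?_, ?_, ?_, ?_⟩
  · intro x hx
    rcases Finset.mem_union.1 hx with hx | hx
    · exact hAX (hSs hx)
    · exact hYX.1 (hTs hx)
  · intro v hv h1
    exact Finset.mem_union_right _ (hT.one v ((hmem v).2 ⟨hv, fun _ => h1⟩) h1)
  · intro v hv h4
    by_cases hvA : v ∈ A
    · have := hS.four v hvA h4
      have := hTA v
      grind
    · have := hT.four v ((hmem v).2 ⟨hv, fun h => absurd h hvA⟩) h4
      have := @hSs v
      grind
  · intro B hB hne
    have hd : Disjoint (B ∩ A) (B \ A) := by rw [Finset.disjoint_left]; grind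
    have hBe : B = (B ∩ A) ∪ (B \ A) := by grind
    have h0 : cr G (B ∩ A) (B \ A) = 0 := by
      unfold cr
      refine Finset.sum_eq_zero fun v hv => nn_zero fun x hx hadj => ?_
      have h1 := hB (Finset.mem_inter.1 hv).1
      have h2 := hB (Finset.mem_sdiff.1 hx).1
      have := hbS v (Finset.mem_inter.1 hv).2 x (by grind) (by grind) hadj.symm
      grind
    have h1 : B ∩ A ⊆ A \ S := by
      intro x hx
      have := hB (Finset.mem_inter.1 hx).1
      grind
    have h2 : B \ A ⊆ Y \ T := by
      intro x hx
      have := hB (Finset.mem_sdiff.1 hx).1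
      have := hmem x
      grind
    have hcr := cr_union_self G hd
    have hca := Finset.card_union_of_disjoint hd
    rw [← hBe, h0] at hcr
    rw [← hBe] at hca
    rw [hcr, hca]
    rcases (B ∩ A).eq_empty_or_nonempty with he | hne1
    · rw [he] at hBe ⊢
      have := hT.fo _ h2 (by rw [Finset.empty_union] at hBe; rwa [← hBe])
      simp [cr] at this ⊢
      linarith
    · have h3 := hS.fo _ h1 hne1
      rcases (B \ A).eq_empty_or_nonempty with he | hne2
      · rw [he]
        simp [cr] at h3 ⊢
        linarith
      · have := hT.fo _ h2 hne2
        push_cast; linarith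
  · have key : ∀ s ∈ S, ∀ t ∈ T, s ≠ t → ¬ G.Adj s t := by
      intro s hs t ht hst hadj
      by_cases htA : t ∈ A
      · exact hS.ind s hs t (hTA t ht htA) hst hadj
      · have := hbS s (hSs hs) t (hYX.1 (hTs ht)) htA hadj.symm
        exact hT.ind s this.2 t ht hst hadj
    intro s hs t ht hst hadj
    rcases Finset.mem_union.1 hs with hs | hs <;> rcases Finset.mem_union.1 ht with ht | ht
    · exact hS.ind s hs t ht hst hadj
    · exact key s hs t ht hst hadj
    · exact key t ht s hs hst.symm hadj.symm
    · exact hT.ind s hs t ht hst hadj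
  · have hTT : ∀ s ∈ T, ∀ t ∈ T, s ≠ t → ∀ z ∈ X, G.Adj z s → G.Adj z t → False := by
      intro s hs t ht hst x hx h1 h2
      by_cases hxY : x ∈ Y
      · exact hT.ind2 s hs t ht hst x hxY h1 h2
      · have hxA : x ∈ A ∧ w x ≠ 1 := by
          have := hmem x
          grind
        have e1 : s ∈ A := by
          by_contra hsA
          exact hxA.2 (hb x hxA.1 s (hYX.1 (hTs hs)) hsA h1.symm)
        have e2 : t ∈ A := by
          by_contra hsA
          exact hxA.2 (hb x hxA.1 t (hYX.1 (hTs ht)) hsA h2.symm)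
        exact hS.ind2 s (hTA s hs e1) t (hTA t ht e2) hst x hxA.1 h1 h2
    have hSS : ∀ s ∈ S, ∀ t ∈ S, s ≠ t → ∀ z ∈ X, G.Adj z s → G.Adj z t → False := by
      intro s hs t ht hst x hx h1 h2
      by_cases hxA : x ∈ A
      · exact hS.ind2 s hs t ht hst x hxA h1 h2
      · exact hTT s (hbS s (hSs hs) x hx hxA h1).2 t (hbS t (hSs ht) x hx hxA h2).2 hst x hx h1 h2
    have key : ∀ s ∈ S, ∀ t ∈ T, s ≠ t → ∀ z ∈ X, G.Adj z s → G.Adj z t → False := by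
      intro s hs t ht hst x hx h1 h2
      by_cases htA : t ∈ A
      · exact hSS s hs t (hTA t ht htA) hst x hx h1 h2
      · by_cases hxA : x ∈ A
        · have := hbS x hxA t (hYX.1 (hTs ht)) htA h2.symm
          exact hS.ind x this.1 s hs h1.ne h1
        · exact hTT s (hbS s (hSs hs) x hx hxA h1).2 t ht hst x hx h1 h2
    intro s hs t ht hst x hx h1 h2
    rcases Finset.mem_union.1 hs with hs | hs <;> rcases Finset.mem_union.1 ht with ht | ht
    · exact hSS s hs t ht hst x hx h1 h2
    · exact key s hs t ht hst x hx h1 h2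
    · exact key t ht s hs hst.symm x hx h2 h1
    · exact hTT s hs t ht hst x hx h1 h2

theorem MC.gap3 {G : SimpleGraph V} {w : V → ℤ} {X A : Finset V} (h : MC G w X) (hA : A ⊂ X)
    {z : V} (hz : z ∈ A) (hwz : w z = 5) (hcard : 3 ≤ A.card) : 3 ≤ rr G w A := by
  by_contra hlt
  have hpos := h.gap2 hA hz hwz
  have hr : rr G w A = 2 := by omega
  obtain ⟨i, hi, u, hu, hiu⟩ := Finset.one_lt_card.1 (show 1 < A.card by omega)
  obtain ⟨v0, hv0, hwv0, x0, hx0, hadj0⟩ := h.glue hA hz hwz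
  obtain ⟨SA, hSA0⟩ := h.ok_lab hA v0
  have hSA := hSA0.unlab
  have hv0S : v0 ∉ SA := hSA0.lab_not hv0 (by have := h.sp.val v0 (hA.1 hv0); grind)
  set w' : V → ℤ := fun v => if v = i then 1 else if v = u then 5 else w v with hw'
  have hwi : w' i = 1 := by simp [hw']
  have hwu : w' u = 5 := by simp [hw', hiu.symm]
  have hw : ∀ v ∉ A, w' v = w v := by
    intro v hv
    have : v ≠ i := by grind
    have : v ≠ u := by grind
    simp [hw', *]
  have hms : ms w' ((X \ A) ∪ {i, u}) < ms w X := by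
    have h1 := ms_contract hA.1 hi hu hiu hwi hw
    rw [hwu] at h1
    have h2 := ms_card5 hz hwz
    rw [if_pos rfl] at h1
    omega
  obtain ⟨S', hS'⟩ := h.ih (CG G A SA i u) w' _ hms (by
    refine ⟨?_, ?_⟩
    · intro v hv
      by_cases hvA : v ∈ A
      · have : v = i ∨ v = u := by grind
        rcases this with rfl | rfl
        · exact Or.inl hwi
        · exact Or.inr (Or.inr hwu)
      · rw [hw v hvA]
        exact h.sp.val v (by grind)
    · intro C hC hne
      obtain ⟨B, hB, hBA, hcase⟩ := CG_pos (G := G) hi hu hiu hSA.sub hC hwi hw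
      have hBAX : B ∪ A ⊆ X := by
        intro x hx
        rcases Finset.mem_union.1 hx with hx | hx
        · exact (Finset.mem_sdiff.1 (hB hx)).1
        · exact hA.1 hx
      have h1 := h.sp.pos (B ∪ A) hBAX ⟨z, by simp [hz]⟩
      have h2 := cr_nonneg G B SA
      have h3 := cr_nonneg G B (A \ SA)
      rw [hwu] at hcase
      rcases hcase with h4 | ⟨-, h4⟩ | ⟨-, h4⟩ | ⟨-, h4⟩
      · have hd : Disjoint C A := by
          rw [Finset.disjoint_left]
          intro x hx; rw [h4] at hx; exact (Finset.mem_sdiff.1 (hB hx)).2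
        rw [CG_rr hi hu hd hw]
        exact h.sp.pos C (by rw [h4]; exact hB.trans Finset.sdiff_subset) hne
      · by_cases hfull : B ∪ A = X
        · have h5 : 1 ≤ cr G B (A \ SA) := by
            have hx0B : x0 ∈ B := by
              have : x0 ∈ B ∪ A := by rw [hfull]; exact (Finset.mem_sdiff.1 hx0).1
              grind
            have h6 := nn_pos (B := A \ SA) (by simp [hv0, hv0S]) hadj0
            have h7 := Finset.single_le_sum (f := fun x => nn G x (A \ SA))
              (fun x _ => nn_nonneg _ _ _) hx0B
            unfold cr
            linarith
          linarith
        · have := h.gap2 (Finset.ssubset_iff_subset_ne.2 ⟨hBAX, hfull⟩)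
            (Finset.mem_union_right _ hz) hwz
          linarith
      · linarith
      · linarith)
  exact h.no _ (CG_ok hi hu hiu hA.1 hSA (h.sp.nn_le hA.1 (by omega)) hwi hw hS')


theorem Ok.ext0 {G : SimpleGraph V} {w : V → ℤ} {X D S : Finset V} (h : Ok G w (X \ D) S)
    (hD : ∀ d ∈ D, w d ≠ 1) (hf : For G (X \ S))
    (h2 : ∀ d ∈ D, ∀ s ∈ S, ∀ t ∈ S, G.Adj d s → G.Adj d t → s = t) : Ok G w X S := by
  have hs := h.sub
  refine ⟨by grind, ?_, ?_, hf, h.ind, ?_⟩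
  · intro v hv h1
    exact h.one v (by grind) h1
  · intro v hv h4 hvS
    exact h.four v (hs hvS) h4 hvS
  · intro s hs t ht hst z hz h3 h4
    by_cases hzD : z ∈ D
    · exact hst (h2 z hzD s hs t ht h3 h4)
    · exact h.ind2 s hs t ht hst z (by grind) h3 h4

theorem Ok.ext1 {G : SimpleGraph V} {w : V → ℤ} {X D S : Finset V} {v : V} (h : Ok G w (X \ D) S)
    (hD : ∀ d ∈ D, w d ≠ 1) (hvX : v ∈ X) (hv : v ∈ D) (hwv : w v = 5)
    (hf : For G (X \ insert v S))
    (hn : ∀ y ∈ X, G.Adj v y → y ∉ S ∧ ∀ s ∈ S, ¬ G.Adj y s)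
    (h2 : ∀ d ∈ D, ∀ s ∈ S, ∀ t ∈ S, G.Adj d s → G.Adj d t → s = t) :
    Ok G w X (insert v S) := by
  have hs := h.sub
  have hnS : ∀ s ∈ S, ¬ G.Adj v s := by
    intro s hs' hadj
    have := hn s (by grind) hadj
    grind
  have hnS2 : ∀ s ∈ S, ∀ z ∈ X, G.Adj z v → G.Adj z s → False := by
    intro s hs' z hz h1 h3
    exact (hn z hz h1.symm).2 s hs' h3
  refine ⟨by grind, ?_, ?_, hf, ?_, ?_⟩
  · intro x hx h1
    exact Finset.mem_insert_of_mem (h.one x (by grind) h1)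
  · intro x hx h4 hvS
    rcases Finset.mem_insert.1 hvS with rfl | hvS
    · omega
    · exact h.four x (hs hvS) h4 hvS
  · intro s hs t ht hst hadj
    rcases Finset.mem_insert.1 hs with rfl | hs1 <;> rcases Finset.mem_insert.1 ht with rfl | ht1
    · exact hst rfl
    · exact hnS t ht1 hadj
    · exact hnS s hs1 hadj.symm
    · exact h.ind s hs1 t ht1 hst hadj
  · intro s hs t ht hst z hz h3 h4
    rcases Finset.mem_insert.1 hs with rfl | hs1 <;> rcases Finset.mem_insert.1 ht with rfl | ht1
    · exact hst rfl
    · exact hnS2 t ht1 z hz h3 h4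
    · exact hnS2 s hs1 z hz h4 h3
    · by_cases hzD : z ∈ D
      · exact hst (h2 z hzD s hs1 t ht1 h3 h4)
      · exact h.ind2 s hs1 t ht1 hst z (by grind) h3 h4

theorem sdiff_ss {X D : Finset V} {v : V} (hv : v ∈ X) (hD : v ∈ D) : X \ D ⊂ X := by
  refine Finset.ssubset_iff_subset_ne.2 ⟨Finset.sdiff_subset, ?_⟩
  intro he
  have : v ∈ X \ D := by rw [he]; exact hv
  simp [hD] at this

theorem MC.r0 {G : SimpleGraph V} {w : V → ℤ} {X : Finset V} (h : MC G w X) {v x : V}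
    (hv : v ∈ X) (hw : w v ≠ 1) (hx : ∀ y ∈ X, G.Adj v y → y = x) : False := by
  obtain ⟨S, hS⟩ := h.ok_sub (sdiff_ss (D := {v}) hv (by simp))
  have hs := hS.sub
  refine h.no S (hS.ext0 (by simpa using hw) ?_ ?_)
  · refine (hS.fo.insert (v := v) ?_).mono (by grind)
    exact nn_le_one x (by grind)
  · grind

theorem MC.r1 {G : SimpleGraph V} {w : V → ℤ} {X : Finset V} (h : MC G w X) {a p v : V}
    (ha : a ∈ X) (hw : w a ≠ 1) (hp : p ∈ X) (hwp : w p = 1) (hv : v ∈ X) (hvp : v ≠ p)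
    (hap : G.Adj a p) (hav : G.Adj a v)
    (hn : ∀ y ∈ X, G.Adj a y → y = p ∨ y = v) : False := by
  have hwv : w v ≠ 1 := fun h1 => h.sp.one_two hv hp ha hvp h1 hwp hav hap
  have hapn := hap.ne
  have havn := hav.ne
  obtain ⟨S, hS0⟩ := h.ok_lab (sdiff_ss (D := {a}) ha (by simp)) v
  have hS := hS0.unlab
  have hvS : v ∉ S := hS0.lab_not (by grind) (by have := h.sp.val v hv; grind)
  have hpS : p ∈ S := hS.one p (by grind) hwp
  have hs := hS.sub
  refine h.no S (hS.ext0 (by simpa using hw) ?_ ?_)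
  · refine (hS.fo.insert (v := a) ?_).mono (by grind)
    exact nn_le_one v (by grind)
  · grind

theorem MC.thread3' {G : SimpleGraph V} {w : V → ℤ} {X S : Finset V} {v a b a' b' : V}
    (hv : v ∈ X) (ha : a ∈ X) (hb : b ∈ X) (hab : a ≠ b)
    (hva : G.Adj v a) (hvb : G.Adj v b) (hwv : w v = 5) (hwa : w a ≠ 1) (hwb : w b ≠ 1)
    (nv : ∀ y ∈ X, G.Adj v y → y = a ∨ y = b)
    (na : ∀ y ∈ X, G.Adj a y → y = v ∨ y = a')
    (nb : ∀ y ∈ X, G.Adj b y → y = v ∨ y = b') (hS : Ok G w (X \ {v, a, b}) S)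
    (haS : a' ∈ S) : Ok G w X S := by
  have hs := hS.sub
  refine hS.ext0 (by grind) ?_ ?_
  · refine (((hS.fo.insert (v := b) ?_).insert (v := v) ?_).insert (v := a) ?_).mono (by grind)
    · exact nn_le_one b' (by grind)
    · exact nn_le_one b (by grind)
    · exact nn_le_one v (by grind)
  · grind

theorem MC.thread3 {G : SimpleGraph V} {w : V → ℤ} {X : Finset V} (h : MC G w X)
    {v a b a' b' : V} (hv : v ∈ X) (ha : a ∈ X) (hb : b ∈ X) (hab : a ≠ b)
    (hva : G.Adj v a) (hvb : G.Adj v b) (hwv : w v = 5) (hwa : w a ≠ 1) (hwb : w b ≠ 1)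
    (nv : ∀ y ∈ X, G.Adj v y → y = a ∨ y = b)
    (na : ∀ y ∈ X, G.Adj a y → y = v ∨ y = a')
    (nb : ∀ y ∈ X, G.Adj b y → y = v ∨ y = b') : False := by
  have e1 := hva.ne
  have e2 := hvb.ne
  obtain ⟨S, hS⟩ := h.ok_sub (sdiff_ss (D := {v, a, b}) hv (by simp))
  have hs := hS.sub
  by_cases haS : a' ∈ S
  · exact h.no S (MC.thread3' hv ha hb hab hva hvb hwv hwa hwb nv na nb hS haS)
  by_cases hbS : b' ∈ S
  · refine h.no S (MC.thread3' hv hb ha hab.symm hvb hva hwv hwb hwa (by grind) nb na ?_ hbS)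
    have : ({v, b, a} : Finset V) = {v, a, b} := by grind
    rwa [this]
  refine h.no _ (hS.ext1 (v := v) (by grind) hv (by simp) hwv ?_ ?_ ?_)
  · refine ((hS.fo.insert (v := b) ?_).insert (v := a) ?_).mono (by grind)
    · exact nn_le_one b' (by grind)
    · exact nn_le_one a' (by grind)
  · grind
  · grind

theorem MC.tri {G : SimpleGraph V} {w : V → ℤ} {X : Finset V} (h : MC G w X)
    {p a b z : V} (hp : p ∈ X) (ha : a ∈ X) (hb : b ∈ X) (hz : z ∈ X)
    (hza : z ≠ a) (hzb : z ≠ b)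
    (hpa : G.Adj p a) (hpb : G.Adj p b) (hab : G.Adj a b) (hpz : G.Adj p z)
    (hwp : w p ≠ 1) (hwa : w a = 5) (hwb : w b ≠ 1)
    (np : ∀ y ∈ X, G.Adj p y → y = a ∨ y = b ∨ y = z)
    (na : ∀ y ∈ X, G.Adj a y → y = p ∨ y = b)
    (nb : ∀ y ∈ X, G.Adj b y → y = a ∨ y = p) : False := by
  have e1 := hpa.ne
  have e2 := hpb.ne
  have e3 := hab.ne
  have e4 := hpz.ne
  have hwz : w z ≠ 1 := by
    intro hwz
    have h1 := h.sp.pos {b, a, p, z} (by grind) (by simp)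
    rw [rr_insert _ _ (by grind), rr_insert _ _ (by grind), rr_insert _ _ (by grind),
      rr_singleton] at h1
    have := nn_two (v := b) (x := a) (y := p) (B := {a, p, z}) (by simp) hab.symm (by simp)
      hpb.symm (by grind)
    have := nn_pos (v := a) (x := p) (B := {p, z}) (by simp) hpa.symm
    have := nn_pos (v := p) (x := z) (B := {z}) (by simp) hpz
    have := h.sp.val p hp
    have := h.sp.val b hb
    omega
  obtain ⟨S, hS0⟩ := h.ok_lab (sdiff_ss (D := {p, a, b}) hp (by simp)) z
  have hS := hS0.unlab
  have hs := hS.sub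
  have hzS : z ∉ S := hS0.lab_not (by grind) (by have := h.sp.val z hz; grind)
  refine h.no _ (hS.ext1 (v := a) (by grind) ha (by simp) hwa ?_ ?_ ?_)
  · refine ((hS.fo.insert (v := p) ?_).insert (v := b) ?_).mono (by grind)
    · exact nn_le_one z (by grind)
    · exact nn_le_one p (by grind)
  · grind
  · grind

theorem cr_le_graph {G G' : SimpleGraph V} (h : G ≤ G') (A : Finset V) : cr G A A ≤ cr G' A A := by
  unfold cr nn ad
  refine Finset.sum_le_sum fun x _ => Finset.sum_le_sum fun y _ => ?_
  have := @h x y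
  split_ifs <;> simp_all

theorem Ok.mono_graph {G G' : SimpleGraph V} {w : V → ℤ} {X S : Finset V} (hG : G ≤ G')
    (h : Ok G' w X S) : Ok G w X S := by
  refine ⟨h.sub, h.one, h.four, ?_, ?_, ?_⟩
  · intro B hB hne
    exact (cr_le_graph hG B).trans (h.fo B hB hne)
  · intro s hs t ht hst hadj
    exact h.ind s hs t ht hst (hG hadj)
  · intro s hs t ht hst z hz h1 h2
    exact h.ind2 s hs t ht hst z hz (hG h1) (hG h2)

/-- add an edge -/
def ae (G : SimpleGraph V) (p r : V) : SimpleGraph V where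
  Adj x y := G.Adj x y ∨ (p ≠ r ∧ ((x = p ∧ y = r) ∨ (x = r ∧ y = p)))
  symm := ⟨by
    rintro x y (h | ⟨h, h1 | h1⟩)
    · exact Or.inl h.symm
    · exact Or.inr ⟨h, Or.inr ⟨h1.2, h1.1⟩⟩
    · exact Or.inr ⟨h, Or.inl ⟨h1.2, h1.1⟩⟩⟩
  loopless := ⟨by
    rintro x (h | ⟨h, h1 | h1⟩)
    · exact G.loopless.irrefl x h
    · exact h (h1.1.symm.trans h1.2)
    · exact h (h1.2.symm.trans h1.1)⟩

theorem le_ae (G : SimpleGraph V) (p r : V) : G ≤ ae G p r := fun _ _ h => Or.inl h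

theorem nn_ae (G : SimpleGraph V) {p r : V} (hpr : p ≠ r) (hn : ¬ G.Adj p r) (x : V)
    (A : Finset V) : nn (ae G p r) x A =
      nn G x A + ((if x = p ∧ r ∈ A then 1 else 0) + (if x = r ∧ p ∈ A then 1 else 0)) := by
  have hn' : ¬ G.Adj r p := fun h => hn h.symm
  have : ∀ y ∈ A, ad (ae G p r) x y = ad G x y +
      ((if y = r then (if x = p then 1 else 0) else 0) +
        (if y = p then (if x = r then 1 else 0) else 0)) := by
    intro y _
    unfold ad ae
    simp only
    by_cases h1 : x = p <;> by_cases h2 : x = r <;> by_cases h3 : y = p <;> by_cases h4 : y = r <;>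
      subst_vars <;> simp_all
  unfold nn
  rw [Finset.sum_congr rfl this, Finset.sum_add_distrib, Finset.sum_add_distrib,
    Finset.sum_ite_eq', Finset.sum_ite_eq']
  split_ifs <;> simp_all

theorem cr_ae (G : SimpleGraph V) {p r : V} (hpr : p ≠ r) (hn : ¬ G.Adj p r)
    (A : Finset V) : cr (ae G p r) A A =
      cr G A A + (if p ∈ A ∧ r ∈ A then 2 else 0) := by
  unfold cr
  rw [Finset.sum_congr rfl fun x _ => nn_ae G hpr hn x A, Finset.sum_add_distrib,
    Finset.sum_add_distrib]
  have h1 : ∑ x ∈ A, (if x = p ∧ r ∈ A then (1 : ℤ) else 0) = if p ∈ A ∧ r ∈ A then 1 else 0 := by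
    by_cases hr : r ∈ A <;> simp [hr]
  have h2 : ∑ x ∈ A, (if x = r ∧ p ∈ A then (1 : ℤ) else 0) = if p ∈ A ∧ r ∈ A then 1 else 0 := by
    by_cases hr : p ∈ A <;> simp [hr]
  rw [h1, h2]
  split_ifs <;> simp

/-- subdividing an edge of a forest -/
theorem For.subdiv {G : SimpleGraph V} {p r c : V} (hpr : p ≠ r) (hn : ¬ G.Adj p r) {Y : Finset V}
    (h : For (ae G p r) Y) (hc : ∀ y ∈ Y, G.Adj c y → y = p ∨ y = r) : For G (Insert.insert c Y) := by
  intro B hB hne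
  by_cases hvB : c ∈ B
  · obtain ⟨B', hvB', rfl⟩ : ∃ B', c ∉ B' ∧ B = Insert.insert c B' :=
      ⟨B.erase c, by simp, by simp [Finset.insert_erase hvB]⟩
    have hB' : B' ⊆ Y := by
      intro x hx
      rcases Finset.mem_insert.1 (hB (Finset.mem_insert_of_mem hx)) with rfl | h1
      · exact absurd hx hvB'
      · exact h1
    rw [cr_insert _ hvB', Finset.card_insert_of_notMem hvB']
    rcases B'.eq_empty_or_nonempty with rfl | hne'
    · simp [cr, nn]
    · have h1 := h B' hB' hne'
      rw [cr_ae G hpr hn] at h1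
      push_cast
      split_ifs at h1 with h2
      · have h3 : nn G c B' ≤ 2 := by
          rw [nn_card]
          have : (B'.filter (G.Adj c)).card ≤ ({p, r} : Finset V).card := by
            refine Finset.card_le_card ?_
            intro y hy
            simp only [mem_filter] at hy
            have := hc y (hB' hy.1) hy.2
            simpa using this
          rw [Finset.card_pair hpr] at this
          omega
        linarith
      · have h3 : nn G c B' ≤ 1 := by
          by_cases hp : p ∈ B'
          · exact nn_le_one p (by grind)
          · exact nn_le_one r (by grind)
        linarith
  · have h1 := h B (by grind) hne
    have := cr_le_graph (le_ae G p r) B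
    linarith

/-- a four cycle -/
theorem MC.c4 {G : SimpleGraph V} {w : V → ℤ} {X : Finset V} (h : MC G w X)
    {p a b c z : V} (hp : p ∈ X) (ha : a ∈ X) (hb : b ∈ X) (hc : c ∈ X) (hz : z ∈ X)
    (hac : a ≠ c) (hza : z ≠ a) (hzc : z ≠ c) (hzb : z ≠ b) (hpb : p ≠ b)
    (hpa : G.Adj p a) (hpc : G.Adj p c) (hab : G.Adj a b) (hbc : G.Adj b c) (hpz : G.Adj p z)
    (hwp : w p ≠ 1) (hwa : w a = 5) (hwb : w b ≠ 1) (hwc : w c ≠ 1) (hwz : w z ≠ 1)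
    (np : ∀ y ∈ X, G.Adj p y → y = a ∨ y = c ∨ y = z)
    (na : ∀ y ∈ X, G.Adj a y → y = p ∨ y = b)
    (nb : ∀ y ∈ X, G.Adj b y → y = a ∨ y = c)
    (nc : ∀ y ∈ X, G.Adj c y → y = p ∨ y = b) : False := by
  have e1 := hpa.ne
  have e2 := hpc.ne
  have e3 := hab.ne
  have e4 := hpz.ne
  have e5 := hbc.ne
  obtain ⟨S, hS0⟩ := h.ok_lab (sdiff_ss (D := {p, a, b, c}) hp (by simp)) z
  have hS := hS0.unlab
  have hs := hS.sub
  have hzS : z ∉ S := hS0.lab_not (by grind) (by have := h.sp.val z hz; grind)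
  refine h.no _ (hS.ext1 (v := a) (by grind) ha (by simp) hwa ?_ ?_ ?_)
  · refine (((hS.fo.insert (v := p) ?_).insert (v := c) ?_).insert (v := b) ?_).mono (by
      intro x hx; simp only [mem_sdiff, mem_insert, mem_singleton] at hx ⊢; tauto)
    · exact nn_le_one z (by grind)
    · exact nn_le_one p (by grind)
    · exact nn_le_one c (by grind)
  · grind
  · grind

/-- configuration where the second thread closes a triangle with the third neighbour -/
theorem MC.one_one_a {G : SimpleGraph V} {w : V → ℤ} {X : Finset V} (h : MC G w X)
    {p a b c z q : V} (hp : p ∈ X) (ha : a ∈ X) (hb : b ∈ X) (hc : c ∈ X) (hz : z ∈ X)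
    (hac : a ≠ c) (hza : z ≠ a) (hzc : z ≠ c) (hzb : z ≠ b) (hpb : p ≠ b) (hbc : b ≠ c)
    (hpa : G.Adj p a) (hpc : G.Adj p c) (hab : G.Adj a b) (hpz : G.Adj p z) (hcz : G.Adj c z)
    (hwp : w p ≠ 1) (hwa : w a = 5) (hwb : w b ≠ 1) (hwc : w c = 5) (hwz : w z ≠ 1)
    (np : ∀ y ∈ X, G.Adj p y → y = a ∨ y = c ∨ y = z)
    (na : ∀ y ∈ X, G.Adj a y → y = p ∨ y = b)
    (nb : ∀ y ∈ X, G.Adj b y → y = a ∨ y = q)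
    (nc : ∀ y ∈ X, G.Adj c y → y = p ∨ y = z) : False := by
  have e1 := hpa.ne
  have e2 := hpc.ne
  have e3 := hab.ne
  have e4 := hpz.ne
  have vp := h.sp.val p hp
  have key : ∀ A ⊆ X \ {p, a, b, c}, z ∈ A → 5 ≤ rr G w A := by
    intro A hA hzA
    have hpA : p ∉ A := by grind
    have hcA : c ∉ insert p A := by grind
    have hss : insert c (insert p A) ⊂ X := by
      refine Finset.ssubset_iff_subset_ne.2 ⟨by grind, ?_⟩
      intro he
      have : a ∈ insert c (insert p A) := by rw [he]; exact ha
      grind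
    have h3 : 3 ≤ (insert c (insert p A)).card := by
      rw [Finset.card_insert_of_notMem hcA, Finset.card_insert_of_notMem hpA]
      have : 0 < A.card := Finset.card_pos.2 ⟨z, hzA⟩
      omega
    have h1 := h.gap3 hss (z := c) (by simp) hwc h3
    rw [rr_insert _ _ hcA, rr_insert _ _ hpA] at h1
    have := nn_two (v := c) (x := p) (y := z) (B := insert p A) (by simp) hpc.symm (by simp [hzA])
      hcz (by grind)
    have := nn_pos (v := p) (x := z) (B := A) hzA hpz
    omega
  have hwz5 : w z = 5 := by
    have h1 := key {z} (by grind) (by simp)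
    rw [rr_singleton] at h1
    have := h.sp.val z hz
    omega
  set w' : V → ℤ := fun v => if v = z then 1 else w v with hw'
  have hw1 : ∀ v, v ≠ z → w' v = w v := by intro v hv; simp [hw', hv]
  have hw2 : w' z = 1 := by simp [hw']
  have hrr : ∀ A, rr G w' A = rr G w A - if z ∈ A then 4 else 0 := by
    intro A
    have h1 : ∑ x ∈ A, w' x = ∑ x ∈ A, w x - if z ∈ A then 4 else 0 := by
      have : ∀ x ∈ A, w' x = w x - if x = z then 4 else 0 := by
        intro x _
        simp only [hw']
        split_ifs with hx
        · rw [hx, hwz5]; norm_num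
        · simp
      rw [Finset.sum_congr rfl this, Finset.sum_sub_distrib, Finset.sum_ite_eq']
    unfold rr
    rw [h1]; ring
  obtain ⟨S, hS'⟩ := h.ih G w' (X \ {p, a, b, c})
    (ms_lt (sdiff_ss hp (by simp)) (by intro v _; simp only [hw']; split_ifs <;> simp)) (by
      refine ⟨?_, ?_⟩
      · intro v hv
        by_cases hvz : v = z
        · rw [hvz, hw2]; simp
        · rw [hw1 v hvz]; exact h.sp.val v (by grind)
      · intro A hA hne
        rw [hrr]
        split_ifs with hzA
        · have := key A hA hzA
          omega
        · have := h.sp.pos A (hA.trans Finset.sdiff_subset) hne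
          omega)
  have hzS : z ∈ S := hS'.one z (by grind) hw2
  have hS : Ok G w (X \ {p, a, b, c}) S := by
    refine ⟨hS'.sub, ?_, ?_, hS'.fo, hS'.ind, hS'.ind2⟩
    · intro v hv h1
      by_cases hvz : v = z
      · rw [hvz]; exact hzS
      · exact hS'.one v hv (by rw [hw1 v hvz]; exact h1)
    · intro v hv h1
      refine hS'.four v hv ?_
      rw [hw1 v (by rintro rfl; omega)]; exact h1
  have hs := hS.sub
  refine h.no S (hS.ext0 (by grind) ?_ ?_)
  · refine ((((hS.fo.insert (v := b) ?_).insert (v := a) ?_).insert (v := p) ?_).insert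
      (v := c) ?_).mono (by
      intro x hx; simp only [mem_sdiff, mem_insert, mem_singleton] at hx ⊢; tauto)
    · exact nn_le_one q (by grind)
    · exact nn_le_one b (by grind)
    · exact nn_le_one a (by grind)
    · exact nn_le_one p (by grind)
  · grind

theorem MC.one_one_b {G : SimpleGraph V} {w : V → ℤ} {X : Finset V} (h : MC G w X)
    {p a b c z q r : V} (hp : p ∈ X) (ha : a ∈ X) (hb : b ∈ X) (hc : c ∈ X) (hz : z ∈ X)
    (hr : r ∈ X) (hac : a ≠ c) (hza : z ≠ a) (hzc : z ≠ c) (hzb : z ≠ b) (hpb : p ≠ b)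
    (hbc : b ≠ c) (hpr : p ≠ r) (hrz : r ≠ z) (hra : r ≠ a) (hrb : r ≠ b) (hqc : q ≠ c)
    (hpa : G.Adj p a) (hpc : G.Adj p c) (hab : G.Adj a b) (hpz : G.Adj p z) (hcr : G.Adj c r)
    (hwp : w p ≠ 1) (hwa : w a = 5) (hwb : w b ≠ 1) (hwc : w c = 5) (hwz : w z ≠ 1)
    (np : ∀ y ∈ X, G.Adj p y → y = a ∨ y = c ∨ y = z)
    (na : ∀ y ∈ X, G.Adj a y → y = p ∨ y = b)
    (nb : ∀ y ∈ X, G.Adj b y → y = a ∨ y = q)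
    (nc : ∀ y ∈ X, G.Adj c y → y = p ∨ y = r) : False := by
  have e1 := hpa.ne
  have e2 := hpc.ne
  have e3 := hab.ne
  have e4 := hpz.ne
  have e5 := hcr.ne
  have hnpr : ¬ G.Adj p r := by
    intro hadj
    have := np r hr hadj
    grind
  have hss := sdiff_ss (D := {a, b, c}) ha (by simp)
  obtain ⟨S, hS0⟩ := h.ih (ae G p r) (lab w z) (X \ {a, b, c})
    (ms_lt hss (by intro v _; unfold lab; grind)) (by
      refine ⟨(h.sp_lab hss z).val, ?_⟩
      intro A hA hne
      have h0 := (h.sp_lab hss z).pos A hA hne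
      have h1 : rr (ae G p r) (lab w z) A = rr G (lab w z) A - if p ∈ A ∧ r ∈ A then 4 else 0 := by
        unfold rr
        rw [cr_ae G hpr hnpr]
        split_ifs <;> ring
      rw [h1]
      split_ifs with h2
      · rw [rr_lab]
        have hcA : c ∉ A := by grind
        have hss : insert c A ⊂ X := by
          refine Finset.ssubset_iff_subset_ne.2 ⟨by grind, ?_⟩
          intro he
          have : a ∈ insert c A := by rw [he]; exact ha
          grind
        have h3 : 3 ≤ (insert c A).card := by
          rw [Finset.card_insert_of_notMem hcA]
          have : 1 < A.card := Finset.one_lt_card.2 ⟨p, h2.1, r, h2.2, hpr⟩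
          omega
        have h4 := h.gap3 hss (z := c) (by simp) hwc h3
        rw [rr_insert _ _ hcA] at h4
        have := nn_two (v := c) (x := p) (y := r) (B := A) h2.1 hpc.symm h2.2 hcr hpr
        split_ifs <;> omega
      · omega)
  have hS1 := hS0.unlab
  have hS := hS1.mono_graph (le_ae G p r)
  have hs := hS.sub
  have hzS : z ∉ S := hS0.lab_not (by grind) (by have := h.sp.val z hz; grind)
  have hfc := For.subdiv (c := c) hpr hnpr hS1.fo (by grind)
  by_cases hpS : p ∈ S
  · have hrS : r ∉ S := fun hrS => hS1.ind p hpS r hrS hpr (Or.inr ⟨hpr, Or.inl ⟨rfl, rfl⟩⟩)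
    refine h.no S (hS.ext0 (by grind) ?_ ?_)
    · refine ((hfc.insert (v := b) ?_).insert (v := a) ?_).mono (by grind)
      · exact nn_le_one q (by grind)
      · exact nn_le_one b (by grind)
    · grind
  by_cases hqS : q ∈ S
  · refine h.no S (hS.ext0 (by grind) ?_ ?_)
    · refine ((hfc.insert (v := a) ?_).insert (v := b) ?_).mono (by grind)
      · exact nn_le_one p (by grind)
      · exact nn_le_one a (by grind)
    · grind
  · refine h.no _ (hS.ext1 (v := a) (by grind) ha (by simp) hwa ?_ ?_ ?_)
    · refine (hfc.insert (v := b) ?_).mono (by grind)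
      exact nn_le_one q (by grind)
    · grind
    · grind

theorem MC.one_one {G : SimpleGraph V} {w : V → ℤ} {X : Finset V} (h : MC G w X)
    {p a b c z q r : V} (hp : p ∈ X) (ha : a ∈ X) (hb : b ∈ X) (hc : c ∈ X) (hz : z ∈ X)
    (hq : q ∈ X) (hr : r ∈ X) (hac : a ≠ c) (hza : z ≠ a) (hzc : z ≠ c)
    (hpb : p ≠ b) (hpr : p ≠ r) (hqa : q ≠ a)
    (hpa : G.Adj p a) (hpc : G.Adj p c) (hpz : G.Adj p z)
    (hab : G.Adj a b) (hbq : G.Adj b q) (hcr : G.Adj c r)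
    (hwp : w p ≠ 1) (hwa : w a = 5) (hwb : w b ≠ 1) (hwc : w c = 5) (hwz : w z ≠ 1)
    (np : ∀ y ∈ X, G.Adj p y → y = a ∨ y = c ∨ y = z)
    (na : ∀ y ∈ X, G.Adj a y → y = p ∨ y = b)
    (nb : ∀ y ∈ X, G.Adj b y → y = a ∨ y = q)
    (nc : ∀ y ∈ X, G.Adj c y → y = p ∨ y = r) : False := by
  by_cases hpb' : G.Adj p b
  · have hqp : q = p := by
      have := nb p hp hpb'.symm
      have := hpa.ne
      grind
    subst hqp
    rcases np b hb hpb' with h1 | h1 | h1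
    · exact hab.ne h1.symm
    · subst h1
      exact h.tri hp ha hb hz hza hzc hpa hpb' hab hpz hwp hwa hwb np na nb
    · subst h1
      exact h.tri hp ha hb hc hac.symm hzc.symm hpa hpb' hab hpc hwp hwa hwb (by grind) na nb
  have hbc : b ≠ c := by rintro rfl; exact hpb' hpc
  have hzb : z ≠ b := by rintro rfl; exact hpb' hpz
  by_cases hqc : q = c
  · subst hqc
    have hrb : r = b := by
      have := nc b hb hbq.symm
      grind
    subst hrb
    exact h.c4 hp ha hb hc hz hac hza hzc hzb hpb hpa hpc hab hbq hpz hwp hwa hwb (by omega) hwz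
      np na nb nc
  have hra : r ≠ a := by
    rintro rfl
    have := na c hc hcr.symm
    have := hpc.ne
    grind
  have hrb : r ≠ b := by
    rintro rfl
    have := nb c hc hcr.symm
    grind
  by_cases hrz : r = z
  · subst hrz
    exact h.one_one_a hp ha hb hc hz hac hza hzc hzb hpb hbc hpa hpc hab hpz hcr hwp hwa hwb hwc
      hwz np na nb nc
  · exact h.one_one_b hp ha hb hc hz hr hac hza hzc hzb hpb hbc hpr hrz hra hrb hqc hpa hpc hab hpz
      hcr hwp hwa hwb hwc hwz np na nb nc

theorem MC.r2 {G : SimpleGraph V} {w : V → ℤ} {X N : Finset V} (h : MC G w X)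
    {v : V} {f : V → V} (hv : v ∈ X) (hwv : w v = 5) (hN : ∀ a, a ∈ N ↔ a ∈ X ∧ G.Adj v a)
    (hcard : 3 ≤ N.card) (hw : ∀ a ∈ N, w a ≠ 1) (hfX : ∀ a ∈ N, f a ∈ X)
    (hfv : ∀ a ∈ N, f a ≠ v) (hfa : ∀ a ∈ N, G.Adj a (f a))
    (hn : ∀ a ∈ N, ∀ y ∈ X, G.Adj a y → y = v ∨ y = f a) : False := by
  have hvN : v ∉ N := fun h1 => G.loopless.irrefl v ((hN v).1 h1).2
  have hNX : N ⊆ X := fun a ha => ((hN a).1 ha).1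
  have hav : ∀ a ∈ N, G.Adj a v := fun a ha => ((hN a).1 ha).2.symm
  have hwf : ∀ a ∈ N, w (f a) ≠ 1 := by
    intro a ha h1
    exact h.r1 (hNX ha) (hw a ha) (hfX a ha) h1 hv (hfv a ha).symm (hfa a ha) (hav a ha)
      (fun y hy hay => (hn a ha y hy hay).symm)
  set P : V → Prop := fun x => w x = 5 ∧ ∃ a ∈ N, G.Adj a x with hP
  set w' : V → ℤ := fun x => if P x then 4 else w x with hw'
  have hss : X \ insert v N ⊂ X := sdiff_ss hv (by simp)
  obtain ⟨S, hS'⟩ := h.ih G w' (X \ insert v N)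
    (ms_lt hss (by intro x _; simp only [hw']; split_ifs <;> simp)) (by
      refine ⟨?_, ?_⟩
      · intro x hx
        simp only [hw']
        split_ifs
        · simp
        · exact h.sp.val x (hss.1 hx)
      · intro A hA hne
        set T := A.filter P with hT
        have hrr : rr G w' A = rr G w A - (T.card : ℤ) := by
          have h1 : ∑ x ∈ A, w' x = ∑ x ∈ A, w x - (T.card : ℤ) := by
            have : ∀ x ∈ A, w' x = w x - if P x then 1 else 0 := by
              intro x _
              simp only [hw']
              split_ifs with hx
              · rw [hx.1]; norm_num
              · simp
            rw [Finset.sum_congr rfl this, Finset.sum_sub_distrib, Finset.sum_boole]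
          unfold rr
          rw [h1]; ring
        rw [hrr]
        have hAss : A ⊂ X := lt_of_le_of_lt hA hss
        have hpos := h.sp.pos A hAss.1 hne
        by_cases ht0 : T.card = 0
        · rw [ht0]; simpa using hpos
        obtain ⟨x0, hx0⟩ := Finset.card_pos.1 (Nat.pos_of_ne_zero ht0)
        have hx0' := Finset.mem_filter.1 hx0
        have hg2 := h.gap2 hAss hx0'.1 hx0'.2.1
        by_cases ht1 : T.card = 1
        · rw [ht1]; push_cast; omega
        set K := N.filter (fun a => f a ∈ T) with hK
        have hKN : K ⊆ N := Finset.filter_subset _ _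
        have hTK : T.card ≤ K.card := by
          refine le_trans (Finset.card_le_card (t := K.image f) ?_) Finset.card_image_le
          intro x hx
          obtain ⟨hxA, hx5, a, ha, hax⟩ := Finset.mem_filter.1 hx
          have hxX := Finset.mem_sdiff.1 (hA hxA)
          rcases hn a ha x hxX.1 hax with h1 | h1
          · exact absurd (by simp [h1]) hxX.2
          · refine Finset.mem_image.2 ⟨a, Finset.mem_filter.2 ⟨ha, ?_⟩, h1.symm⟩
            rw [← h1]; exact hx
        have hvA : v ∉ A := by
          intro h1
          have := (Finset.mem_sdiff.1 (hA h1)).2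
          simp at this
        have hAN : ∀ a ∈ A, a ∉ N := by
          intro a h1 h2
          have := (Finset.mem_sdiff.1 (hA h1)).2
          simp [h2] at this
        have hd : Disjoint A K := by
          rw [Finset.disjoint_left]
          intro a h1 h2
          exact hAN a h1 (hKN h2)
        have hvAK : v ∉ A ∪ K := by
          intro h1
          rcases Finset.mem_union.1 h1 with h1 | h1
          · exact hvA h1
          · exact hvN (hKN h1)
        have e1 : rr G w K ≤ 5 * (K.card : ℤ) := by
          unfold rr
          have h1 : ∑ x ∈ K, w x ≤ ∑ _x ∈ K, (5 : ℤ) := by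
            refine Finset.sum_le_sum fun x hx => ?_
            rcases h.sp.val x (hNX (hKN hx)) with h | h | h <;> omega
          have := cr_nonneg G K K
          simp at h1
          linarith
        have e2 : (K.card : ℤ) ≤ cr G A K := by
          rw [cr_comm]
          unfold cr
          have h1 : ∑ _x ∈ K, (1 : ℤ) ≤ ∑ x ∈ K, nn G x A := by
            refine Finset.sum_le_sum fun a ha => ?_
            obtain ⟨h1, h2⟩ := Finset.mem_filter.1 ha
            exact nn_pos (Finset.mem_filter.1 h2).1 (hfa a h1)
          simpa using h1
        have e3 : (K.card : ℤ) ≤ nn G v (A ∪ K) := by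
          rw [nn_card]
          have : K.card ≤ ((A ∪ K).filter (G.Adj v)).card := by
            refine Finset.card_le_card ?_
            intro a ha
            exact Finset.mem_filter.2 ⟨Finset.mem_union_right _ ha, (hav a (hKN ha)).symm⟩
          exact_mod_cast this
        have hsub : insert v (A ∪ K) ⊆ X := by
          intro x hx
          rcases Finset.mem_insert.1 hx with rfl | hx
          · exact hv
          rcases Finset.mem_union.1 hx with hx | hx
          · exact hAss.1 hx
          · exact hNX (hKN hx)
        have e4 := h.sp.pos _ hsub ⟨v, by simp⟩
        have e5 := rr_insert G w hvAK
        rw [rr_union G w hd] at e5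
        rw [e5] at e4
        by_cases hk : 3 ≤ K.card
        · zify at hk hTK
          linarith
        · have hk2 : K.card = 2 := by omega
          have hproper : insert v (A ∪ K) ⊂ X := by
            refine Finset.ssubset_iff_subset_ne.2 ⟨hsub, ?_⟩
            intro he
            have : N ⊆ K := by
              intro a ha
              have h1 : a ∈ insert v (A ∪ K) := by rw [he]; exact hNX ha
              rcases Finset.mem_insert.1 h1 with rfl | hx
              · exact absurd ha hvN
              rcases Finset.mem_union.1 hx with hx | hx
              · exact absurd ha (hAN a hx)
              · exact hx
            have := Finset.card_le_card this
            omega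
          have e6 := h.gap2 hproper (z := v) (by simp) hwv
          rw [e5] at e6
          zify at hk2 hTK
          linarith)
  have hs := hS'.sub
  have hS : Ok G w (X \ insert v N) S := by
    refine ⟨hs, ?_, ?_, hS'.fo, hS'.ind, hS'.ind2⟩
    · intro x hx h1
      refine hS'.one x hx ?_
      simp only [hw', hP]
      rw [if_neg (by omega)]; exact h1
    · intro x hx h1
      refine hS'.four x hx ?_
      simp only [hw']
      split_ifs <;> simp [h1]
  have hfS : ∀ a ∈ N, f a ∉ S := by
    intro a ha hfaS
    refine hS'.four (f a) (hs hfaS) ?_ hfaS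
    simp only [hw', hP]
    have h1 := h.sp.val (f a) (hfX a ha)
    have h2 := hwf a ha
    by_cases h5 : w (f a) = 5
    · rw [if_pos ⟨h5, a, ha, hfa a ha⟩]
    · rw [if_neg (by tauto)]; tauto
  have hnv : ∀ s ∈ S, s ∈ X ∧ s ≠ v ∧ s ∉ N := by
    intro s hsS
    have := Finset.mem_sdiff.1 (hs hsS)
    simp only [mem_insert, not_or] at this
    exact ⟨this.1, this.2.1, this.2.2⟩
  have hnd : ∀ a ∈ N, ∀ s ∈ S, ¬ G.Adj a s := by
    intro a ha s hsS hadj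
    obtain ⟨h1, h2, h3⟩ := hnv s hsS
    rcases hn a ha s h1 hadj with h4 | h4
    · exact h2 h4
    · exact hfS a ha (h4 ▸ hsS)
  refine h.no _ (hS.ext1 (v := v) ?_ hv (by simp) hwv ?_ ?_ ?_)
  · intro d hd
    rcases Finset.mem_insert.1 hd with rfl | hd
    · omega
    · exact hw d hd
  · refine (hS.fo.union (K := N) ?_).mono ?_
    · intro a ha
      refine nn_le_one (f a) ?_
      intro y hy hay
      simp only [mem_union, mem_sdiff, mem_insert] at hy
      have hyX : y ∈ X := by
        rcases hy with hy | hy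
        · exact hy.1.1
        · exact hNX hy
      rcases hn a ha y hyX hay with h1 | h1
      · subst h1
        tauto
      · exact h1
    · intro x hx
      simp only [mem_union, mem_sdiff, mem_insert] at hx ⊢
      tauto
  · intro y hy hvy
    have hyN := (hN y).2 ⟨hy, hvy⟩
    exact ⟨fun h1 => (hnv y h1).2.2 hyN, hnd y hyN⟩
  · intro d hd s hsS t htS h1 h2
    rcases Finset.mem_insert.1 hd with rfl | hd
    · exact absurd ((hN s).2 ⟨(hnv s hsS).1, h1⟩) (hnv s hsS).2.2
    · exact absurd h1 (hnd d hd s hsS)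

/-- degree inside `X` -/
noncomputable def dg (G : SimpleGraph V) (X : Finset V) (v : V) : ℕ := (X.filter (G.Adj v)).card

theorem dg_two {G : SimpleGraph V} {X : Finset V} {v u : V} (h : dg G X v = 2) (hu : u ∈ X)
    (hvu : G.Adj v u) :
    ∃ u' ∈ X, u' ≠ u ∧ G.Adj v u' ∧ ∀ y ∈ X, G.Adj v y → y = u ∨ y = u' := by
  obtain ⟨a, b, hab, he⟩ := Finset.card_eq_two.1 h
  have key : ∀ y, (y ∈ X ∧ G.Adj v y) ↔ (y = a ∨ y = b) := by
    intro y
    have : y ∈ X.filter (G.Adj v) ↔ y ∈ ({a, b} : Finset V) := by rw [he]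
    simpa using this
  have ha := (key a).2 (Or.inl rfl)
  have hb := (key b).2 (Or.inr rfl)
  rcases (key u).1 ⟨hu, hvu⟩ with rfl | rfl
  · exact ⟨b, hb.1, hab.symm, hb.2, fun y hy h1 => (key y).1 ⟨hy, h1⟩⟩
  · exact ⟨a, ha.1, hab, ha.2, fun y hy h1 => ((key y).1 ⟨hy, h1⟩).symm⟩

theorem MC.dg_ge {G : SimpleGraph V} {w : V → ℤ} {X : Finset V} (h : MC G w X) {v : V}
    (hv : v ∈ X) (hw : w v ≠ 1) : 2 ≤ dg G X v := by
  by_contra hlt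
  have h1 : (X.filter (G.Adj v)).card ≤ 1 := by unfold dg at hlt; omega
  obtain ⟨x, hx⟩ : ∃ x, ∀ y ∈ X, G.Adj v y → y = x := by
    rcases (X.filter (G.Adj v)).eq_empty_or_nonempty with he | ⟨x, hx⟩
    · refine ⟨v, fun y hy hvy => ?_⟩
      have : y ∈ X.filter (G.Adj v) := by simp [hy, hvy]
      rw [he] at this
      simp at this
    · exact ⟨x, fun y hy hvy => Finset.card_le_one.1 h1 y (by simp [hy, hvy]) x hx⟩
  exact h.r0 hv hw hx

theorem MC.dg_one {G : SimpleGraph V} {w : V → ℤ} {X : Finset V} (h : MC G w X) {v : V}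
    (hv : v ∈ X) (hw : w v = 1) : 1 ≤ dg G X v := by
  by_contra hlt
  have h1 : X.filter (G.Adj v) = ∅ := by
    unfold dg at hlt
    rw [← Finset.card_eq_zero]; omega
  have h2 : nn G v (X.erase v) = 0 := by
    refine nn_zero fun y hy hvy => ?_
    have : y ∈ X.filter (G.Adj v) := by simp [Finset.mem_of_mem_erase hy, hvy]
    rw [h1] at this
    simp at this
  have h3 := h.rX
  have h4 := rr_insert G w (Finset.notMem_erase v X)
  rw [Finset.insert_erase hv] at h4
  obtain ⟨u, hu, hwu⟩ := h.exU
  have hne : u ≠ v := by rintro rfl; omega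
  have h5 := h.sp.pos (X.erase v) (Finset.erase_subset _ _) ⟨u, by simp [hu, hne]⟩
  omega

theorem MC.noI {G : SimpleGraph V} {w : V → ℤ} {X : Finset V} (h : MC G w X) {v u : V}
    (hv : v ∈ X) (hw : w v ≠ 1) (hd : dg G X v = 2) (hu : u ∈ X) (hvu : G.Adj v u) :
    w u ≠ 1 := by
  intro hwu
  obtain ⟨u', hu', hne, hvu', hall⟩ := dg_two hd hu hvu
  exact h.r1 hv hw hu hwu hu' hne hvu hvu' hall

def tw (G : SimpleGraph V) (w : V → ℤ) (X : Finset V) (x : V) : Prop := w x = 5 ∧ dg G X x = 2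

def hvy (G : SimpleGraph V) (X : Finset V) (x : V) : Prop := ∃ y ∈ X, G.Adj x y ∧ dg G X y = 2

/-- charge sent from `x` to `y` -/
noncomputable def fl (G : SimpleGraph V) (w : V → ℤ) (X : Finset V) (x y : V) : ℤ :=
  if G.Adj x y then
    (if tw G w X x then (if 3 ≤ dg G X y then (if hvy G X x then 2 else 1) else 0)
      else if w y = 1 then 2 else 0)
  else 0

theorem fl_nonneg (G : SimpleGraph V) (w : V → ℤ) (X : Finset V) (x y : V) : 0 ≤ fl G w X x y := by
  unfold fl; split_ifs <;> simp

theorem fl_le (G : SimpleGraph V) (w : V → ℤ) (X : Finset V) (x y : V) : fl G w X x y ≤ 2 := by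
  unfold fl; split_ifs <;> simp

theorem fl_in (G : SimpleGraph V) (w : V → ℤ) (X : Finset V) (x : V) :
    ∑ y ∈ X, fl G w X y x = ∑ y ∈ X.filter (G.Adj x), fl G w X y x := by
  rw [Finset.sum_filter]
  refine Finset.sum_congr rfl fun y _ => ?_
  split_ifs with h1
  · rfl
  · unfold fl
    rw [if_neg (fun h2 => h1 h2.symm)]

theorem MC.third {G : SimpleGraph V} {w : V → ℤ} {X : Finset V} (h : MC G w X)
    {p a c z : V} (hp : p ∈ X) (ha : a ∈ X) (hc : c ∈ X) (hz : z ∈ X)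
    (hac : a ≠ c) (hza : z ≠ a) (hzc : z ≠ c)
    (hpa : G.Adj p a) (hpc : G.Adj p c) (hpz : G.Adj p z)
    (np : ∀ y ∈ X, G.Adj p y → y = a ∨ y = c ∨ y = z)
    (hwp : w p ≠ 1) (hd : dg G X p = 3)
    (hta : tw G w X a) (hha : hvy G X a) (htc : tw G w X c) : w z = 1 := by
  by_contra hwz
  obtain ⟨b, hb, hbp, hab, na⟩ := dg_two hta.2 hp hpa.symm
  have hdb : dg G X b = 2 := by
    obtain ⟨y, hy, hay, hdy⟩ := hha
    rcases na y hy hay with rfl | rfl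
    · omega
    · exact hdy
  have hwb : w b ≠ 1 := h.noI ha (by rw [hta.1]; norm_num) hta.2 hb hab
  obtain ⟨q, hq, hqa, hbq, nb⟩ := dg_two hdb ha hab.symm
  obtain ⟨r, hr, hrp, hcr, nc⟩ := dg_two htc.2 hp hpc.symm
  exact h.one_one hp ha hb hc hz hq hr hac hza hzc hbp.symm hrp.symm hqa hpa hpc hpz hab hbq hcr
    hwp hta.1 hwb htc.1 hwz np na nb nc

theorem MC.r2' {G : SimpleGraph V} {w : V → ℤ} {X : Finset V} (h : MC G w X)
    {v : V} (hv : v ∈ X) (hwv : w v = 5) (hd : 3 ≤ dg G X v) :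
    ∃ a ∈ X, G.Adj v a ∧ ¬ tw G w X a := by
  by_contra hc
  push Not at hc
  have key : ∀ a, ∃ u', (a ∈ X ∧ G.Adj v a) → (u' ∈ X ∧ u' ≠ v ∧ G.Adj a u' ∧
      ∀ y ∈ X, G.Adj a y → y = v ∨ y = u') := by
    intro a
    by_cases ha : a ∈ X ∧ G.Adj v a
    · obtain ⟨u', h1, h2, h3, h4⟩ := dg_two (hc a ha.1 ha.2).2 hv ha.2.symm
      exact ⟨u', fun _ => ⟨h1, h2, h3, h4⟩⟩
    · exact ⟨a, fun h => absurd h ha⟩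
  choose f hf using key
  have hN : ∀ a, a ∈ X.filter (G.Adj v) ↔ a ∈ X ∧ G.Adj v a := by simp
  refine h.r2 (N := X.filter (G.Adj v)) (f := f) hv hwv hN hd ?_ ?_ ?_ ?_ ?_
  · intro a ha
    rw [(hc a ((hN a).1 ha).1 ((hN a).1 ha).2).1]; norm_num
  · intro a ha; exact (hf a ((hN a).1 ha)).1
  · intro a ha; exact (hf a ((hN a).1 ha)).2.1
  · intro a ha; exact (hf a ((hN a).1 ha)).2.2.1
  · intro a ha; exact (hf a ((hN a).1 ha)).2.2.2

theorem MC.charge {G : SimpleGraph V} {w : V → ℤ} {X : Finset V} (h : MC G w X) {x : V}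
    (hx : x ∈ X) :
    2 * (w x - 2 * (dg G X x : ℤ)) - ∑ y ∈ X, fl G w X x y + ∑ y ∈ X, fl G w X y x ≤ 0 := by
  have hout : 0 ≤ ∑ y ∈ X, fl G w X x y := Finset.sum_nonneg fun y _ => fl_nonneg _ _ _ _ _
  have hin : ∑ y ∈ X, fl G w X y x ≤ 2 * (dg G X x : ℤ) := by
    rw [fl_in]
    calc _ ≤ ∑ _y ∈ X.filter (G.Adj x), (2 : ℤ) := Finset.sum_le_sum fun y _ => fl_le _ _ _ _ _
      _ = _ := by simp [dg]; ring
  by_cases h1 : w x = 1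
  · have := h.dg_one hx h1
    omega
  have hval := h.sp.val x hx
  have hd2 := h.dg_ge hx h1
  by_cases hd : dg G X x = 2
  · have hin0 : ∑ y ∈ X, fl G w X y x = 0 := by
      refine Finset.sum_eq_zero fun y _ => ?_
      unfold fl
      simp [hd, h1]
    rw [hin0]
    by_cases h5 : w x = 5
    · have htw : tw G w X x := ⟨h5, hd⟩
      have hpos : 0 < (X.filter (G.Adj x)).card := by unfold dg at hd; omega
      obtain ⟨a, ha⟩ := Finset.card_pos.1 hpos
      have ha' := Finset.mem_filter.1 ha
      obtain ⟨b, hb, hba, hxb, nx⟩ := dg_two hd ha'.1 ha'.2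
      have hwa := h.noI hx h1 hd ha'.1 ha'.2
      have hwb := h.noI hx h1 hd hb hxb
      have hda := h.dg_ge ha'.1 hwa
      have hdb := h.dg_ge hb hwb
      have hno : ¬ (dg G X a = 2 ∧ dg G X b = 2) := by
        rintro ⟨h2, h3⟩
        obtain ⟨a', -, -, -, na⟩ := dg_two h2 hx ha'.2.symm
        obtain ⟨b', -, -, -, nb⟩ := dg_two h3 hx hxb.symm
        exact h.thread3 hx ha'.1 hb hba.symm ha'.2 hxb h5 hwa hwb nx na nb
      have hsum : fl G w X x a + fl G w X x b ≤ ∑ y ∈ X, fl G w X x y := by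
        rw [← Finset.sum_pair hba.symm]
        refine Finset.sum_le_sum_of_subset_of_nonneg ?_ fun y _ _ => fl_nonneg _ _ _ _ _
        intro y hy
        simp only [mem_insert, mem_singleton] at hy
        rcases hy with rfl | rfl
        · exact ha'.1
        · exact hb
      have hge : 2 ≤ fl G w X x a + fl G w X x b := by
        unfold fl
        rw [if_pos ha'.2, if_pos hxb, if_pos htw, if_pos htw]
        by_cases e1 : dg G X a = 2
        · have hh : hvy G X x := ⟨a, ha'.1, ha'.2, e1⟩
          rw [if_pos hh, if_pos (show 3 ≤ dg G X b by omega)]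
          split_ifs <;> norm_num
        · by_cases e2 : dg G X b = 2
          · have hh : hvy G X x := ⟨b, hb, hxb, e2⟩
            rw [if_pos hh, if_pos (show 3 ≤ dg G X a by omega)]
            split_ifs <;> norm_num
          · rw [if_pos (show 3 ≤ dg G X b by omega), if_pos (show 3 ≤ dg G X a by omega)]
            split_ifs <;> norm_num
      omega
    · omega
  have hd3 : 3 ≤ dg G X x := by omega
  have hfl : ∀ y ∈ X, G.Adj x y →
      fl G w X y x = if tw G w X y then (if hvy G X y then 2 else 1) else 0 := by
    intro y hy hxy
    unfold fl
    rw [if_pos hxy.symm, if_pos hd3, if_neg h1]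
  by_cases hd4 : 4 ≤ dg G X x
  · by_cases h5 : w x = 5
    · obtain ⟨a, ha, hxa, hta⟩ := h.r2' hx h5 hd3
      have hin' : ∑ y ∈ X, fl G w X y x ≤ 2 * (dg G X x : ℤ) - 2 := by
        rw [fl_in]
        have ha' : a ∈ X.filter (G.Adj x) := by simp [ha, hxa]
        rw [← Finset.add_sum_erase _ _ ha', hfl a ha hxa, if_neg hta]
        have hle : ∑ y ∈ (X.filter (G.Adj x)).erase a, fl G w X y x ≤
            ∑ _y ∈ (X.filter (G.Adj x)).erase a, (2 : ℤ) :=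
          Finset.sum_le_sum fun y _ => fl_le _ _ _ _ _
        have hce := Finset.card_erase_of_mem ha'
        rw [Finset.sum_const, hce] at hle
        unfold dg at hd4 ⊢
        rw [nsmul_eq_mul, Nat.cast_sub (by omega)] at hle
        push_cast at hle
        linarith
      omega
    · omega
  have hd3' : dg G X x = 3 := by omega
  obtain ⟨a, b, c, hab, hac, hbc, he⟩ := Finset.card_eq_three.1 hd3'
  have key : ∀ y, (y ∈ X ∧ G.Adj x y) ↔ (y = a ∨ y = b ∨ y = c) := by
    intro y
    have : y ∈ X.filter (G.Adj x) ↔ y ∈ ({a, b, c} : Finset V) := by rw [he]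
    simpa using this
  have ha := (key a).2 (Or.inl rfl)
  have hb := (key b).2 (Or.inr (Or.inl rfl))
  have hc := (key c).2 (Or.inr (Or.inr rfl))
  have hins : ∑ y ∈ X, fl G w X y x = fl G w X a x + (fl G w X b x + fl G w X c x) := by
    rw [fl_in, he, Finset.sum_insert (by simp [hab, hac]), Finset.sum_pair hbc]
  rw [hins, hfl a ha.1 ha.2, hfl b hb.1 hb.2, hfl c hc.1 hc.2]
  have nx : ∀ y ∈ X, G.Adj x y → y = a ∨ y = b ∨ y = c := fun y hy h2 => (key y).1 ⟨hy, h2⟩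
  have third : ∀ a ∈ X, ∀ b ∈ X, ∀ c ∈ X, G.Adj x a → G.Adj x b → G.Adj x c → a ≠ b → c ≠ a →
      c ≠ b → (∀ y ∈ X, G.Adj x y → y = a ∨ y = b ∨ y = c) →
      tw G w X a → hvy G X a → tw G w X b →
      ¬ tw G w X c ∧ 2 ≤ ∑ y ∈ X, fl G w X x y := by
    intro a ha b hb c hc hxa hxb hxc h2 h3 h4 nx hta hha htb
    have hw1 := h.third hx ha hb hc h2 h3 h4 hxa hxb hxc nx h1 hd3' hta hha htb
    refine ⟨fun htc => by have := htc.1; omega, ?_⟩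
    have e1 := Finset.single_le_sum (f := fun y => fl G w X x y)
      (fun y _ => fl_nonneg G w X x y) hc
    have e2 : fl G w X x c = 2 := by
      unfold fl
      rw [if_pos hxc, if_neg (fun ht => hd ht.2), if_pos hw1]
    simp only [e2] at e1
    exact e1
  have t1 := third a ha.1 b hb.1 c hc.1 ha.2 hb.2 hc.2 hab hac.symm hbc.symm (by grind)
  have t2 := third b hb.1 a ha.1 c hc.1 hb.2 ha.2 hc.2 hab.symm hbc.symm hac.symm (by grind)
  have t3 := third a ha.1 c hc.1 b hb.1 ha.2 hc.2 hb.2 hac hab.symm hbc (by grind)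
  have t4 := third c hc.1 a ha.1 b hb.1 hc.2 ha.2 hb.2 hac.symm hbc hab.symm (by grind)
  have t5 := third b hb.1 c hc.1 a ha.1 hb.2 hc.2 ha.2 hbc hab hac (by grind)
  have t6 := third c hc.1 b hb.1 a ha.1 hc.2 hb.2 ha.2 hbc.symm hac hab (by grind)
  have hnt : w x = 5 → ¬ (tw G w X a ∧ tw G w X b ∧ tw G w X c) := by
    intro h5
    obtain ⟨u, hu, hxu, htu⟩ := h.r2' hx h5 hd3
    rintro ⟨q1, q2, q3⟩
    rcases nx u hu hxu with rfl | rfl | rfl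
    · exact htu q1
    · exact htu q2
    · exact htu q3
  rw [hd3']
  clear hins hfl key third nx hin
  generalize ∑ y ∈ X, fl G w X x y = O at *
  by_cases p1 : tw G w X a <;> by_cases p2 : tw G w X b <;> by_cases p3 : tw G w X c <;>
    by_cases q1 : hvy G X a <;> by_cases q2 : hvy G X b <;> by_cases q3 : hvy G X c <;>
    simp only [p1, p2, p3, q1, q2, q3, if_true, if_false, true_imp_iff, not_true, not_false_iff,
      true_and, false_and, and_true, and_false, false_imp_iff, imp_false] at t1 t2 t3 t4 t5 t6 hnt ⊢ <;>
    omega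

theorem no_MC {G : SimpleGraph V} {w : V → ℤ} {X : Finset V} (h : MC G w X) : False := by
  have h1 := Finset.sum_le_sum (s := X) (g := fun _ => (0 : ℤ)) (fun x hx => h.charge hx)
  rw [Finset.sum_add_distrib, Finset.sum_sub_distrib, ← Finset.mul_sum, Finset.sum_sub_distrib,
    Finset.sum_comm (f := fun x y => fl G w X x y)] at h1
  have h2 := h.rX
  unfold rr cr at h2
  rw [Finset.sum_congr rfl fun x _ => nn_card G x X] at h2
  rw [← Finset.mul_sum] at h1
  simp only [Finset.sum_const_zero, dg] at h1
  linarith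

theorem main_aux (n : ℕ) : ∀ (G : SimpleGraph V) (w : V → ℤ) (X : Finset V), ms w X = n →
    Sp G w X → ∃ S, Ok G w X S := by
  induction n using Nat.strong_induction_on with
  | _ n ih =>
    intro G w X hn hsp
    by_contra hc
    push Not at hc
    exact no_MC ⟨hsp, fun G' w' X' hlt h' => ih _ (hn ▸ hlt) G' w' X' rfl h', hc⟩

theorem Sp.exists_ok {G : SimpleGraph V} {w : V → ℤ} {X : Finset V} (h : Sp G w X) :
    ∃ S, Ok G w X S := main_aux _ G w X rfl h

theorem For.leaf {G : SimpleGraph V} {Y : Finset V} (h : For G Y) (hne : Y.Nonempty) :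
    ∃ v ∈ Y, nn G v Y ≤ 1 := by
  by_contra hc
  push Not at hc
  have h1 := h Y (Finset.Subset.refl _) hne
  have h2 : ∑ _x ∈ Y, (2 : ℤ) ≤ ∑ x ∈ Y, nn G x Y :=
    Finset.sum_le_sum fun x hx => by have := hc x hx; omega
  unfold cr at h1
  simp at h2
  linarith

theorem For.height (G : SimpleGraph V) (n : ℕ) : ∀ Y : Finset V, Y.card = n → For G Y →
    ∃ f : V → ℕ, (∀ x ∈ Y, ∀ y ∈ Y, G.Adj x y → f x = f y + 1 ∨ f y = f x + 1) ∧
      (∀ x ∈ Y, ∀ y ∈ Y, ∀ z ∈ Y, G.Adj x y → G.Adj x z → f x = f y + 1 → f x = f z + 1 →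
        y = z) := by
  induction n with
  | zero =>
    intro Y hY _
    rw [Finset.card_eq_zero] at hY
    subst hY
    exact ⟨fun _ => 0, by simp, by simp⟩
  | succ n ih =>
    intro Y hY hF
    obtain ⟨v, hv, hn⟩ := hF.leaf (Finset.card_pos.1 (by omega))
    obtain ⟨f, hf1, hf2⟩ := ih (Y.erase v) (by rw [Finset.card_erase_of_mem hv]; omega)
      (hF.mono (Finset.erase_subset _ _))
    have hu : ∀ x ∈ Y, ∀ y ∈ Y, G.Adj v x → G.Adj v y → x = y :=
      fun x hx y hy h1 h2 => nn_le_one_iff hn hx hy h1 h2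
    obtain ⟨k, hk⟩ : ∃ k, ∀ x ∈ Y, G.Adj v x → k = f x + 1 := by
      by_cases hex : ∃ x ∈ Y, G.Adj v x
      · obtain ⟨x, hx, hvx⟩ := hex
        exact ⟨f x + 1, fun y hy hvy => by rw [hu x hx y hy hvx hvy]⟩
      · exact ⟨0, fun y hy hvy => absurd ⟨y, hy, hvy⟩ hex⟩
    have hg1 : ∀ x, x ≠ v → (if x = v then k else f x) = f x := fun x hx => if_neg hx
    have hvv : ¬ G.Adj v v := G.loopless.irrefl v
    refine ⟨fun x => if x = v then k else f x, ?_, ?_⟩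
    · intro x hx y hy hxy
      by_cases hxv : x = v
      · subst hxv
        have hyx := hxy.ne.symm
        simp only [if_true, hg1 y hyx]
        exact Or.inl (hk y hy hxy)
      · by_cases hyv : y = v
        · subst hyv
          simp only [if_true, hg1 x hxv]
          exact Or.inr (hk x hx hxy.symm)
        · simp only [hg1 x hxv, hg1 y hyv]
          exact hf1 x (by simp [hx, hxv]) y (by simp [hy, hyv]) hxy
    · intro x hx y hy z hz hxy hxz h1 h2
      by_cases hxv : x = v
      · subst hxv
        exact hu y hy z hz hxy hxz
      · simp only [hg1 x hxv] at h1 h2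
        have key : ∀ y ∈ Y, G.Adj x y → f x = (if y = v then k else f y) + 1 → y ≠ v := by
          rintro y hy hxy h1 rfl
          rw [if_pos rfl] at h1
          have := hk x hx hxy.symm
          omega
        have hyv := key y hy hxy h1
        have hzv := key z hz hxz h2
        rw [hg1 y hyv] at h1
        rw [hg1 z hzv] at h2
        exact hf2 x (by simp [hx, hxv]) y (by simp [hy, hyv]) z (by simp [hz, hzv]) hxy hxz h1 h2

theorem acyclic_of_p4 {W : Type*} (H : SimpleGraph W)
    (h : ∀ a b c d : W, H.Adj a b → H.Adj b c → H.Adj c d → a = c ∨ b = d) : H.IsAcyclic := by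
  intro v p hp
  have hl := hp.three_le_length
  have h1 := p.adj_getVert_succ (i := 0) (by omega)
  have h2 := p.adj_getVert_succ (i := 1) (by omega)
  have h3 := p.adj_getVert_succ (i := 2) (by omega)
  rcases h _ _ _ _ h1 h2 h3 with h4 | h4
  · have := hp.getVert_injOn' (x₁ := 0) (x₂ := 2) (by simp) (by simp; omega) h4
    omega
  · have := hp.getVert_injOn (x₁ := 1) (x₂ := 3) (by simp; omega) (by simp; omega) h4
    omega

theorem star_of_p4 {k : ℕ} {G : SimpleGraph V} {c : V → Fin k}
    (hp : ∀ u v, G.Adj u v → c u ≠ c v)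
    (h : ∀ x y z t : V, G.Adj x y → G.Adj y z → G.Adj z t → c x = c z → c y = c t →
      x = z ∨ y = t) : IsStarColoring G c := by
  refine ⟨hp, fun i j => ?_⟩
  have key : ∀ x y z t : {v | c v = i ∨ c v = j},
      (G.induce {v | c v = i ∨ c v = j}).Adj x y → (G.induce {v | c v = i ∨ c v = j}).Adj y z →
      (G.induce {v | c v = i ∨ c v = j}).Adj z t → x = z ∨ y = t := by
    rintro ⟨x, hx⟩ ⟨y, hy⟩ ⟨z, hz⟩ ⟨t, ht⟩ h1 h2 h3
    simp only [SimpleGraph.comap_adj, Function.Embedding.subtype_apply] at h1 h2 h3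
    simp only [Set.mem_setOf_eq] at hx hy hz ht
    have e1 := hp _ _ h1
    have e2 := hp _ _ h2
    have e3 := hp _ _ h3
    have := h x y z t h1 h2 h3 (by grind) (by grind)
    simpa using this
  exact ⟨acyclic_of_p4 _ key, key⟩

theorem Ok.star [Fintype V] {G : SimpleGraph V} {w : V → ℤ} {S : Finset V}
    (h : Ok G w Finset.univ S) : StarColorable G 4 := by
  obtain ⟨f, hf1, hf2⟩ := For.height G _ _ rfl h.fo
  have hm : ∀ x, x ∉ S → x ∈ Finset.univ \ S := by simp
  set c : V → Fin 4 := fun v => if v ∈ S then 3 else ⟨f v % 3, by omega⟩ with hc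
  have hcS : ∀ v, v ∈ S ↔ c v = 3 := by
    intro v
    constructor
    · intro hv; simp [hc, hv]
    · intro h3
      by_contra hv
      simp only [hc, if_neg hv] at h3
      have := congrArg Fin.val h3
      simp at this
      omega
  have hcF : ∀ v, v ∉ S → (c v).val = f v % 3 := by
    intro v hv
    simp [hc, hv]
  refine ⟨c, star_of_p4 ?_ ?_⟩
  · intro u v huv he
    by_cases hu : u ∈ S
    · have hv : v ∈ S := by rw [hcS, ← he, ← hcS]; exact hu
      exact h.ind u hu v hv huv.ne huv
    · have hv : v ∉ S := by rw [hcS, ← he, ← hcS]; exact hu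
      have h1 := hf1 u (hm u hu) v (hm v hv) huv
      have h2 := hcF u hu
      have h3 := hcF v hv
      rw [he] at h2
      omega
  · intro x y z t hxy hyz hzt hxz hyt
    by_contra hcon
    push Not at hcon
    by_cases hx : x ∈ S
    · have hz : z ∈ S := by rw [hcS, ← hxz, ← hcS]; exact hx
      exact h.ind2 x hx z hz hcon.1 y (Finset.mem_univ _) hxy.symm hyz
    have hz : z ∉ S := by rw [hcS, ← hxz, ← hcS]; exact hx
    by_cases hy : y ∈ S
    · have ht : t ∈ S := by rw [hcS, ← hyt, ← hcS]; exact hy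
      exact h.ind2 y hy t ht hcon.2 z (Finset.mem_univ _) hyz.symm hzt
    have ht : t ∉ S := by rw [hcS, ← hyt, ← hcS]; exact hy
    have a1 := hf1 x (hm x hx) y (hm y hy) hxy
    have a2 := hf1 y (hm y hy) z (hm z hz) hyz
    have a3 := hf1 z (hm z hz) t (hm t ht) hzt
    have b1 := hcF x hx
    have b2 := hcF y hy
    have b3 := hcF z hz
    have b4 := hcF t ht
    rw [hxz] at b1
    rw [hyt] at b2
    by_cases hd : f y = f x + 1
    · exact hcon.1 (hf2 y (hm y hy) x (hm x hx) z (hm z hz) hxy.symm hyz hd (by omega))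
    · exact hcon.2 (hf2 z (hm z hz) y (hm y hy) t (hm t ht) hyz.symm hzt (by omega) (by omega))

theorem Mad.sp [Fintype V] {G : SimpleGraph V} (h : MadLt G (5 / 2)) :
    Sp G (fun _ => 5) Finset.univ := by
  refine ⟨fun _ _ => by simp, fun A _ hne => ?_⟩
  set H : G.Subgraph := (⊤ : G.Subgraph).induce (A : Set V) with hH
  have hv : H.verts = (A : Set V) := rfl
  have h1 := h H (by rw [hv]; exact_mod_cast hne)
  rw [hv, Set.ncard_coe_finset] at h1
  have hpos : (0 : ℚ) < A.card := by exact_mod_cast Finset.card_pos.2 hne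
  rw [div_lt_iff₀ hpos] at h1
  have h2 : cr G A A ≤ 2 * (Nat.card H.edgeSet : ℤ) := by
    have h3 := H.spanningCoe.sum_degrees_eq_twice_card_edges
    have h4 : H.spanningCoe.edgeFinset.card = Nat.card H.edgeSet := by
      rw [← H.edgeSet_spanningCoe, Nat.card_eq_fintype_card, SimpleGraph.edgeFinset_card]
    rw [h4] at h3
    have h5 : cr G A A ≤ ∑ v ∈ A, (H.spanningCoe.degree v : ℤ) := by
      unfold cr
      refine Finset.sum_le_sum fun v hvA => ?_
      rw [nn_card]
      have : (A.filter (G.Adj v)).card ≤ H.spanningCoe.degree v := by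
        rw [← SimpleGraph.card_neighborFinset_eq_degree]
        refine Finset.card_le_card ?_
        intro y hy
        obtain ⟨hy1, hy2⟩ := Finset.mem_filter.1 hy
        rw [SimpleGraph.mem_neighborFinset]
        simp [hH, hvA, hy1, hy2]
      exact_mod_cast this
    have h6 : ∑ v ∈ A, (H.spanningCoe.degree v : ℤ) ≤ ∑ v, (H.spanningCoe.degree v : ℤ) :=
      Finset.sum_le_sum_of_subset_of_nonneg (Finset.subset_univ _) fun _ _ _ => by positivity
    zify at h3
    linarith
  have h7 : 4 * (Nat.card H.edgeSet : ℤ) < 5 * (A.card : ℤ) := by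
    have : (4 * (Nat.card H.edgeSet : ℚ)) < 5 * (A.card : ℚ) := by linarith
    exact_mod_cast this
  unfold rr
  simp only [Finset.sum_const, nsmul_eq_mul]
  linarith

theorem main [Fintype V] (G : SimpleGraph V) (h : MadLt G (5 / 2)) : StarColorable G 4 := by
  obtain ⟨S, hS⟩ := (Mad.sp h).exists_ok
  exact hS.star

end IFP

/-- If `G` is a finite simple graph with maximum average degree less than `5/2`,
then the star chromatic number of `G` is at most `4`. -/
theorem starChromatic_le_four_of_mad_lt {V : Type*} [Fintype V] (G : SimpleGraph V)
    (h : MadLt G (5 / 2)) : StarColorable G 4 := by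
  exact IFP.main G h
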